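/- arXiv:1405.0944 — 4 statements merged into one kernel-verified Lean document; each statement's English description precedes it below -/
import Mathlib

section
/- Let a ∈ ℝ and let f, h : [a, ∞) → (0, ∞) be C² functions. If f''(r)/f(r) ≤ h''(r)/h(r) for all r > a, and f'(a)/f(a) ≤ h'(a)/h(a), then f'(r)/f(r) ≤ h'(r)/h(r) for all r > a. -/
/-- The derivative within `[a, ∞)` of a `C²` function on `[a, ∞)` is itself differentiable there. -/
lemma ContDiffOn.differentiableOn_derivWithin_Ici {a : ℝ} {f : ℝ → ℝ}
    (hf : ContDiffOn ℝ 2 f (Set.Ici a)) :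
    DifferentiableOn ℝ (derivWithin f (Set.Ici a)) (Set.Ici a) :=
  (hf.derivWithin (m := 1) (uniqueDiffOn_Ici a) (by norm_num)).differentiableOn one_ne_zero

/-- The Wronskian `h' f - f' h` of two `C²` functions is monotone when `f'' h ≤ h'' f`. -/
lemma monotoneOn_wronskian_Ici {a : ℝ} {f h : ℝ → ℝ}
    (hf : ContDiffOn ℝ 2 f (Set.Ici a)) (hh : ContDiffOn ℝ 2 h (Set.Ici a))
    (hcmp : ∀ r, a < r →
      derivWithin (derivWithin f (Set.Ici a)) (Set.Ici a) r * h r ≤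
        derivWithin (derivWithin h (Set.Ici a)) (Set.Ici a) r * f r) :
    MonotoneOn (fun r ↦ derivWithin h (Set.Ici a) r * f r - derivWithin f (Set.Ici a) r * h r)
      (Set.Ici a) := by
  have hf₁ := hf.differentiableOn two_ne_zero
  have hh₁ := hh.differentiableOn two_ne_zero
  have hf₂ := hf.differentiableOn_derivWithin_Ici
  have hh₂ := hh.differentiableOn_derivWithin_Ici
  refine monotoneOn_of_hasDerivWithinAt_nonneg (convex_Ici a)
    ((hh₂.mul hf₁).sub (hf₂.mul hh₁)).continuousOn
    (fun r hr ↦ ((((hh₂ r (interior_subset hr)).hasDerivWithinAt.mul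
      (hf₁ r (interior_subset hr)).hasDerivWithinAt).sub
      ((hf₂ r (interior_subset hr)).hasDerivWithinAt.mul
      (hh₁ r (interior_subset hr)).hasDerivWithinAt)).mono interior_subset)) fun r hr ↦ ?_
  rw [interior_Ici] at hr
  linarith [hcmp r hr]

/-- Sturm's comparison theorem (the "Laplacian Comparison Theorem"):
if `f, h` are positive `C²` functions on `[a, ∞)` with `f''/f ≤ h''/h` on `(a, ∞)`
and `f'(a)/f(a) ≤ h'(a)/h(a)`, then `f'(r)/f(r) ≤ h'(r)/h(r)` for all `r > a`. -/
theorem sturm_comparison (a : ℝ) (f h : ℝ → ℝ)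
    (hf : ContDiffOn ℝ 2 f (Set.Ici a)) (hh : ContDiffOn ℝ 2 h (Set.Ici a))
    (hfpos : ∀ r ∈ Set.Ici a, 0 < f r) (hhpos : ∀ r ∈ Set.Ici a, 0 < h r)
    (hcmp : ∀ r, a < r →
      derivWithin (derivWithin f (Set.Ici a)) (Set.Ici a) r / f r ≤
        derivWithin (derivWithin h (Set.Ici a)) (Set.Ici a) r / h r)
    (hinit : derivWithin f (Set.Ici a) a / f a ≤ derivWithin h (Set.Ici a) a / h a) :
    ∀ r, a < r →
      derivWithin f (Set.Ici a) r / f r ≤ derivWithin h (Set.Ici a) r / h r := by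
  intro r hr
  have hmono := monotoneOn_wronskian_Ici hf hh fun s hs ↦
    (div_le_div_iff₀ (hfpos s hs.le) (hhpos s hs.le)).1 (hcmp s hs)
  have hle := hmono Set.self_mem_Ici hr.le hr.le
  rw [div_le_div_iff₀ (hfpos a Set.self_mem_Ici) (hhpos a Set.self_mem_Ici)] at hinit
  rw [div_le_div_iff₀ (hfpos r hr.le) (hhpos r hr.le)]
  linarith
end

section
/- Let 1 < r₁ < r₂, and assume that the mean-curvature comparison (∂f/∂r)(r,θ)/f(r,θ) ≤ (1 + log r)/(r log r) holds for all r ∈ (r₁, r₂) and all θ. Let u : ℝ² → ℝ be a C² subharmonic function (Δ_g u ≥ 0), and for ρ > 0 set M_ρ = max_{θ ∈ [0,2π)} u(ρ cos θ, ρ sin θ). Then for every r with r₁ < r < r₂, M_r ≤ ( M_{r₁} · log(log r₂ / log r) + M_{r₂} · log(log r / log r₁) ) / log(log r₂ / log r₁). -/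
open Real Filter Set

/-- The Laplace–Beltrami operator of the metric `g = dr² + f(r,θ)² dθ²` acting on a
function `u` of the plane, expressed in polar coordinates `(r, θ)`. -/
noncomputable def polarLaplacian (f : ℝ → ℝ → ℝ) (u : ℝ × ℝ → ℝ) (r θ : ℝ) : ℝ :=
  deriv (deriv (fun s => u (s * Real.cos θ, s * Real.sin θ))) r
    + (deriv (fun s => f s θ) r / f r θ) *
        deriv (fun s => u (s * Real.cos θ, s * Real.sin θ)) r
    + (1 / (f r θ) ^ 2) *
        deriv (deriv (fun t => u (r * Real.cos t, r * Real.sin t))) θ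
    - (deriv (fun t => f r t) θ / (f r θ) ^ 3) *
        deriv (fun t => u (r * Real.cos t, r * Real.sin t)) θ

/-- `M_ρ = max_{θ ∈ [0, 2π)} u(ρ cos θ, ρ sin θ)`. -/
noncomputable def Mmax (u : ℝ × ℝ → ℝ) (ρ : ℝ) : ℝ :=
  sSup ((fun θ => u (ρ * Real.cos θ, ρ * Real.sin θ)) '' Set.Ico 0 (2 * Real.pi))

open MeasureTheory

/-- A continuous function on `[a, b]` which can always be continued to the right inside a closed
set `B` without decreasing at a definite rate satisfies `φ a ≤ φ b`. -/
lemma le_of_forall_exists_right_le {φ : ℝ → ℝ} {a b : ℝ} {B : Set ℝ} (hab : a ≤ b)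
    (hφ : ContinuousOn φ (Icc a b)) (hB : IsClosed B) (ha : a ∈ B)
    (hstep : ∀ ε > 0, ∀ x ∈ B, a ≤ x → x < b →
      ∃ y ∈ B, x < y ∧ y ≤ b ∧ φ x - ε * (y - x) ≤ φ y) : φ a ≤ φ b := by
  have key : ∀ ε > 0, φ a - ε * (b - a) ≤ φ b := by
    intro ε hε
    have hcont : ContinuousOn (fun x => φ x + ε * (x - a)) (Icc a b) := by fun_prop
    obtain ⟨S, hS⟩ : ∃ S, S = B ∩ (Icc a b ∩ (fun x => φ x + ε * (x - a)) ⁻¹' Ici (φ a)) :=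
      ⟨_, rfl⟩
    have hScl : IsClosed S :=
      hS ▸ hB.inter (hcont.preimage_isClosed_of_isClosed isClosed_Icc isClosed_Ici)
    have hSb : BddAbove S := ⟨b, fun x hx => by rw [hS] at hx; exact hx.2.1.2⟩
    have haS : a ∈ S := by
      rw [hS]; exact ⟨ha, ⟨le_rfl, hab⟩, by simp⟩
    have hmem : sSup S ∈ S := hScl.csSup_mem ⟨a, haS⟩ hSb
    obtain ⟨hxB, ⟨hax, hxb⟩, hx⟩ := hS ▸ hmem
    have hx' : φ a ≤ φ (sSup S) + ε * (sSup S - a) := by rw [hS]; exact hx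
    rw [← hS] at hxB hax hxb
    rcases hxb.eq_or_lt with h | h
    · rw [h] at hx'; linarith
    · obtain ⟨y, hyB, hxy, hyb, hy⟩ := hstep ε hε _ hxB hax h
      have : y ∈ S := by
        rw [hS]
        refine ⟨hyB, ⟨by linarith, hyb⟩, ?_⟩
        simp only [mem_preimage, mem_Ici]
        nlinarith
      exact absurd (le_csSup hSb this) (not_le.mpr hxy)
  by_contra! h
  rcases hab.eq_or_lt with rfl | hlt
  · exact lt_irrefl _ h
  have := key ((φ a - φ b) / (2 * (b - a))) (by
    apply div_pos <;> linarith)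
  have h2 : (φ a - φ b) / (2 * (b - a)) * (b - a) = (φ a - φ b) / 2 := by
    field_simp [(sub_pos.mpr hlt).ne']
  linarith

/-- A continuous function which is locally monotone on the open interval `(c, d)` satisfies
`φ c ≤ φ d`. -/
lemma le_of_locally_monotoneOn_Ioo {φ : ℝ → ℝ} {a b c d : ℝ} (hcd : c < d)
    (hsub : Icc c d ⊆ Icc a b) (hφ : ContinuousOn φ (Icc a b))
    (hloc : ∀ x ∈ Ioo c d, ∃ U ∈ nhds x, MonotoneOn φ (U ∩ Icc a b)) : φ c ≤ φ d := by
  have hmono : MonotoneOn φ (Ioo c d) := by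
    intro x hx y hy hxy
    refine le_of_forall_exists_right_le (B := univ) hxy
      (hφ.mono fun t ht => hsub ⟨by linarith [hx.1, ht.1], by linarith [hy.2, ht.2]⟩)
      isClosed_univ trivial ?_
    intro ε hε t _ hxt hty
    have htcd : t ∈ Ioo c d := ⟨by linarith [hx.1], by linarith [hy.2]⟩
    obtain ⟨U, hU, hm⟩ := hloc t htcd
    obtain ⟨η, hη, hball⟩ := Metric.mem_nhds_iff.mp hU
    obtain ⟨s, hts, hs⟩ := exists_between (lt_min hty (show t < t + η by linarith))
    rw [lt_min_iff] at hs
    refine ⟨s, trivial, hts, hs.1.le, ?_⟩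
    have := hm ⟨mem_of_mem_nhds hU, hsub ⟨htcd.1.le, htcd.2.le⟩⟩
      ⟨hball (by rw [Metric.mem_ball, Real.dist_eq, abs_lt]; constructor <;> linarith),
        hsub ⟨by linarith [htcd.1], by linarith [hy.2]⟩⟩ hts.le
    nlinarith
  obtain ⟨m, hm⟩ := nonempty_Ioo.mpr hcd
  have hlim : ∀ x ∈ Icc c d, Tendsto φ (nhdsWithin x (Ioo c d)) (nhds (φ x)) := fun x hx =>
    (hφ x (hsub hx)).mono (Ioo_subset_Icc_self.trans hsub)
  have hc := hlim c ⟨le_rfl, hcd.le⟩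
  have hd := hlim d ⟨hcd.le, le_rfl⟩
  rw [nhdsWithin_Ioo_eq_nhdsGT hcd] at hc
  rw [nhdsWithin_Ioo_eq_nhdsLT hcd] at hd
  have h1 : φ c ≤ φ m := le_of_tendsto hc <| by
    filter_upwards [Ioo_mem_nhdsGT hm.1] with x hx
    exact hmono ⟨hx.1, hx.2.trans hm.2⟩ hm hx.2.le
  have h2 : φ m ≤ φ d := ge_of_tendsto hd <| by
    filter_upwards [Ioo_mem_nhdsLT hm.2] with x hx
    exact hmono hm ⟨hm.1.trans hx.1, hx.2⟩ hx.1.le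
  exact h1.trans h2

/-- Category argument: a family `Φ r` whose increments are nondecreasing in `r`, and which for
small `r` is almost nondecreasing along each member of a countable closed cover (with a threshold
for `r` depending on the member), consists of nondecreasing functions. -/
lemma monotoneOn_of_closed_cover {Φ : ℝ → ℝ → ℝ} {a b ρ : ℝ} {E : ℕ → Set ℝ} {δ : ℕ → ℝ}
    (hE : ∀ n, IsClosed (E n)) (hcover : ∀ x ∈ Icc a b, ∃ n, x ∈ E n) (hδ : ∀ n, 0 < δ n)
    (hcont : ∀ r ∈ Ioc 0 ρ, ContinuousOn (Φ r) (Icc a b))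
    (hincr : ∀ r ∈ Ioc 0 ρ, ∀ r' ∈ Ioc 0 ρ, r ≤ r' → ∀ x ∈ Icc a b, ∀ y ∈ Icc a b, x ≤ y →
      Φ r y - Φ r x ≤ Φ r' y - Φ r' x)
    (hright : ∀ n, ∀ r ∈ Ioc 0 ρ, r < δ n → ∀ x ∈ E n ∩ Icc a b, ∀ ε > 0,
      ∀ᶠ y in nhdsWithin x (Ioi x), y ∈ E n ∩ Icc a b → Φ r x - ε * (y - x) ≤ Φ r y) :
    ∀ r ∈ Ioc 0 ρ, MonotoneOn (Φ r) (Icc a b) := by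
  let nice : ℝ → Prop := fun x => ∃ U ∈ nhds x, ∀ r ∈ Ioc 0 ρ, MonotoneOn (Φ r) (U ∩ Icc a b)
  have hgap : ∀ r ∈ Ioc 0 ρ, ∀ c ∈ Icc a b, ∀ d ∈ Icc a b, c ≤ d →
      (∀ x ∈ Ioo c d, nice x) → Φ r c ≤ Φ r d := by
    intro r hr c hc d hd hcd hn
    rcases hcd.eq_or_lt with rfl | hlt
    · exact le_rfl
    refine le_of_locally_monotoneOn_Ioo hlt (Icc_subset_Icc hc.1 hd.2) (hcont r hr) ?_
    intro x hx
    obtain ⟨U, hU, hm⟩ := hn x hx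
    exact ⟨U, hU, hm r hr⟩
  have hopen : IsOpen {x | nice x} := by
    rw [isOpen_iff_mem_nhds]
    rintro x ⟨U, hU, hm⟩
    filter_upwards [eventually_mem_nhds_iff.mpr hU] with y hy using ⟨U, hy, hm⟩
  obtain ⟨bad, hbad⟩ : ∃ bad : Set ℝ, bad = Icc a b ∩ {x | nice x}ᶜ := ⟨_, rfl⟩
  have hbadcl : IsClosed bad := hbad ▸ isClosed_Icc.inter hopen.isClosed_compl
  have hnotbad : ∀ x ∈ Icc a b, x ∉ bad → nice x := by
    intro x hx hxb
    by_contra h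
    exact hxb (hbad ▸ ⟨hx, h⟩)
  rcases bad.eq_empty_or_nonempty with hempty | hne
  · intro r hr x hx y hy hxy
    exact hgap r hr x hx y hy hxy fun t ht =>
      hnotbad t ⟨hx.1.trans ht.1.le, ht.2.le.trans hy.2⟩ (by simp [hempty])
  exfalso
  have : Nonempty bad := hne.to_subtype
  have : CompleteSpace bad := hbadcl.completeSpace_coe
  obtain ⟨n, x, hx⟩ := nonempty_interior_of_iUnion_of_closed
    (f := fun n => (Subtype.val : bad → ℝ) ⁻¹' E n)
    (fun n => (hE n).preimage continuous_subtype_val) (by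
      rw [eq_univ_iff_forall]
      rintro ⟨x, hx⟩
      obtain ⟨n, hn⟩ := hcover x (hbad ▸ hx).1
      exact mem_iUnion.mpr ⟨n, hn⟩)
  obtain ⟨η, hη, hball⟩ := Metric.mem_nhds_iff.mp (mem_interior_iff_mem_nhds.mp hx)
  have hEn : ∀ y ∈ bad, y ∈ Metric.ball (x : ℝ) η → y ∈ E n := fun y hy hyx =>
    hball (show (⟨y, hy⟩ : bad) ∈ Metric.ball x η from hyx)
  have hxnice : ¬ nice x := by
    have h : (x : ℝ) ∈ Icc a b ∩ {x | nice x}ᶜ := hbad.subset x.2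
    exact h.2
  refine hxnice ⟨Metric.ball x η, Metric.ball_mem_nhds _ hη, ?_⟩
  have hsmall : ∀ r ∈ Ioc 0 ρ, r < δ n → MonotoneOn (Φ r) (Metric.ball (x : ℝ) η ∩ Icc a b) := by
    intro r hr hrn c hc d hd hcd
    have hsub : Icc c d ⊆ Metric.ball (x : ℝ) η ∩ Icc a b := by
      have : (Metric.ball (x : ℝ) η ∩ Icc a b).OrdConnected := by
        rw [Real.ball_eq_Ioo]; infer_instance
      exact this.out hc hd
    refine le_of_forall_exists_right_le (B := bad ∪ {c, d}) hcd
      ((hcont r hr).mono fun t ht => (hsub ht).2)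
      (hbadcl.union (Set.toFinite _).isClosed) (by simp) ?_
    intro ε hε t ht hct htd
    have htsub := hsub ⟨hct, htd.le⟩
    by_cases hacc : ∃ᶠ y in nhdsWithin t (Ioi t), y ∈ bad
    · have htbad : t ∈ bad := by
        have h1 : ∃ᶠ y in nhds t, y ∈ bad := hacc.filter_mono nhdsWithin_le_nhds
        exact hbadcl.closure_subset (mem_closure_iff_frequently.mpr h1)
      have hev := hright n r hr hrn t ⟨hEn t htbad htsub.1, htsub.2⟩ ε hε
      obtain ⟨y, hybad, hy, hyt⟩ :=
        (hacc.and_eventually (hev.and (Ioo_mem_nhdsGT htd))).exists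
      have hysub := hsub ⟨hct.trans hyt.1.le, hyt.2.le⟩
      exact ⟨y, Or.inl hybad, hyt.1, hyt.2.le, hy ⟨hEn y hybad hysub.1, hysub.2⟩⟩
    · rw [not_frequently] at hacc
      obtain ⟨z, hz, hzsub⟩ := (mem_nhdsGT_iff_exists_Ioo_subset' htd).mp hacc
      obtain ⟨T, hT⟩ : ∃ T, T = (bad ∪ {c, d}) ∩ Icc (min z d) d := ⟨_, rfl⟩
      have hTcl : IsClosed T :=
        hT ▸ (hbadcl.union (Set.toFinite _).isClosed).inter isClosed_Icc
      have hTb : BddBelow T := ⟨min z d, fun s hs => by rw [hT] at hs; exact hs.2.1⟩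
      have hdT : d ∈ T := by rw [hT]; exact ⟨by simp, min_le_right _ _, le_rfl⟩
      have hmem := hTcl.csInf_mem ⟨d, hdT⟩ hTb
      obtain ⟨y, hy⟩ : ∃ y, y = sInf T := ⟨_, rfl⟩
      rw [← hy] at hmem
      have hymem := hmem
      rw [hT] at hymem
      have hty : t < y := (lt_min hz htd).trans_le hymem.2.1
      refine ⟨y, hymem.1, hty, hymem.2.2, ?_⟩
      have := hgap r hr t htsub.2 y (hsub ⟨hct.trans hty.le, hymem.2.2⟩).2 hty.le ?_
      · nlinarith
      intro s hs
      refine hnotbad s (hsub ⟨hct.trans hs.1.le, hs.2.le.trans hymem.2.2⟩).2 fun hsb => ?_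
      by_cases hsz : s < z
      · exact hzsub ⟨hs.1, hsz⟩ hsb
      · have : s ∈ T := by
          rw [hT]
          exact ⟨Or.inl hsb, (min_le_left _ _).trans (not_lt.mp hsz), hs.2.le.trans hymem.2.2⟩
        exact absurd (csInf_le hTb this) (not_le.mpr (hy ▸ hs.2))
  intro r hr c hc d hd hcd
  have hr' : min r (δ n / 2) ∈ Ioc 0 ρ :=
    ⟨lt_min hr.1 (half_pos (hδ n)), (min_le_left _ _).trans hr.2⟩
  have h1 := hsmall _ hr' ((min_le_right _ _).trans_lt (half_lt_self (hδ n))) hc hd hcd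
  have h2 := hincr _ hr' r hr (min_le_left _ _) c hc.2 d hd.2 hcd
  linarith

/-- The partial derivative in the first (radial) variable. -/
noncomputable def radialDeriv (V : ℝ × ℝ → ℝ) (p : ℝ × ℝ) : ℝ := fderiv ℝ V p (1, 0)

/-- The partial derivative in the second (angular) variable. -/
noncomputable def angularDeriv (V : ℝ × ℝ → ℝ) (p : ℝ × ℝ) : ℝ := fderiv ℝ V p (0, 1)

/-- The Laplace–Beltrami operator of `dr² + F² dθ²` acting on functions of `(r, θ)`. -/
noncomputable def warpedLaplacian (F V : ℝ × ℝ → ℝ) (p : ℝ × ℝ) : ℝ :=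
  radialDeriv (radialDeriv V) p + radialDeriv F p / F p * radialDeriv V p
    + angularDeriv (angularDeriv V) p / F p ^ 2
    - angularDeriv F p / F p ^ 3 * angularDeriv V p

lemma ContDiff.radialDeriv {V : ℝ × ℝ → ℝ} {n : ℕ} (hV : ContDiff ℝ (n + 1) V) :
    ContDiff ℝ n (radialDeriv V) :=
  (hV.fderiv_right (m := n) le_rfl).clm_apply contDiff_const

lemma ContDiff.angularDeriv {V : ℝ × ℝ → ℝ} {n : ℕ} (hV : ContDiff ℝ (n + 1) V) :
    ContDiff ℝ n (angularDeriv V) :=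
  (hV.fderiv_right (m := n) le_rfl).clm_apply contDiff_const

lemma contDiff_one_radialDeriv {V : ℝ × ℝ → ℝ} (hV : ContDiff ℝ 2 V) :
    ContDiff ℝ 1 (radialDeriv V) :=
  ContDiff.radialDeriv (n := 1) (by norm_num; exact hV)

lemma contDiff_one_angularDeriv {V : ℝ × ℝ → ℝ} (hV : ContDiff ℝ 2 V) :
    ContDiff ℝ 1 (angularDeriv V) :=
  ContDiff.angularDeriv (n := 1) (by norm_num; exact hV)

lemma continuous_radialDeriv_radialDeriv {V : ℝ × ℝ → ℝ} (hV : ContDiff ℝ 2 V) :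
    Continuous (radialDeriv (radialDeriv V)) :=
  (ContDiff.radialDeriv (n := 0) (by simpa using contDiff_one_radialDeriv hV)).continuous

lemma continuous_angularDeriv_angularDeriv {V : ℝ × ℝ → ℝ} (hV : ContDiff ℝ 2 V) :
    Continuous (angularDeriv (angularDeriv V)) :=
  (ContDiff.angularDeriv (n := 0) (by simpa using contDiff_one_angularDeriv hV)).continuous

lemma isOpen_fst_pos : IsOpen {p : ℝ × ℝ | 0 < p.1} := isOpen_lt continuous_const continuous_fst

lemma continuousOn_warpedLaplacian {F V : ℝ × ℝ → ℝ} (hF : ContDiffOn ℝ 1 F {p | 0 < p.1})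
    (hFpos : ∀ p : ℝ × ℝ, 0 < p.1 → 0 < F p) (hV : ContDiff ℝ 2 V) :
    ContinuousOn (warpedLaplacian F V) {p | 0 < p.1} := by
  have h0 := hF.continuousOn
  have h1 : ContinuousOn (fderiv ℝ F) {p | 0 < p.1} :=
    hF.continuousOn_fderiv_of_isOpen isOpen_fst_pos le_rfl
  have h2 : ContinuousOn (radialDeriv F) {p | 0 < p.1} := h1.clm_apply continuousOn_const
  have h3 : ContinuousOn (angularDeriv F) {p | 0 < p.1} := h1.clm_apply continuousOn_const
  have h4 := (continuous_radialDeriv_radialDeriv hV).continuousOn (s := {p | 0 < p.1})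
  have h5 := (continuous_angularDeriv_angularDeriv hV).continuousOn (s := {p | 0 < p.1})
  have h6 := (contDiff_one_radialDeriv hV).continuous.continuousOn (s := {p | 0 < p.1})
  have h7 := (contDiff_one_angularDeriv hV).continuous.continuousOn (s := {p | 0 < p.1})
  have hne : ∀ p ∈ {p : ℝ × ℝ | 0 < p.1}, F p ≠ 0 := fun p hp => (hFpos p hp).ne'
  exact ((h4.add ((h2.div h0 hne).mul h6)).add
    (h5.div (h0.pow 2) fun p hp => pow_ne_zero _ (hne p hp))).sub
    ((h3.div (h0.pow 3) fun p hp => pow_ne_zero _ (hne p hp)).mul h7)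

/-- The divergence theorem for the vector field `(K(F) V_r, -H(F) V_θ)`, where
`K'(s) = g(s) / s` and `H'(s) = g(s) / s³`. -/
lemma integral_weighted_warpedLaplacian {F V : ℝ × ℝ → ℝ} {g K H : ℝ → ℝ}
    (hF : ContDiffOn ℝ 1 F {p | 0 < p.1}) (hFpos : ∀ p : ℝ × ℝ, 0 < p.1 → 0 < F p)
    (hV : ContDiff ℝ 2 V) (hg : ContinuousOn g (Ioi 0))
    (hK : ∀ s > 0, HasDerivAt K (g s / s) s) (hH : ∀ s > 0, HasDerivAt H (g s / s ^ 3) s)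
    {r r' a b : ℝ} (hr : 0 < r) (hrr : r ≤ r') (hab : a ≤ b) :
    IntegrableOn (fun p => g (F p) * warpedLaplacian F V p
        - (g (F p) - K (F p)) * radialDeriv (radialDeriv V) p
        - (g (F p) / F p ^ 2 + H (F p)) * angularDeriv (angularDeriv V) p)
        (Icc (r, a) (r', b)) ∧
    ∫ p in Icc (r, a) (r', b), (g (F p) * warpedLaplacian F V p
        - (g (F p) - K (F p)) * radialDeriv (radialDeriv V) p
        - (g (F p) / F p ^ 2 + H (F p)) * angularDeriv (angularDeriv V) p) =
      (∫ y in a..b, K (F (r', y)) * radialDeriv V (r', y))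
        - (∫ y in a..b, K (F (r, y)) * radialDeriv V (r, y))
        - ((∫ x in r..r', H (F (x, b)) * angularDeriv V (x, b))
          - ∫ x in r..r', H (F (x, a)) * angularDeriv V (x, a)) := by
  have hsub : Icc (r, a) (r', b) ⊆ {p : ℝ × ℝ | 0 < p.1} := fun p hp => hr.trans_le hp.1.1
  have hFc := hF.continuousOn
  have hmaps : MapsTo F {p | 0 < p.1} (Ioi 0) := fun p hp => hFpos p hp
  have hKc : ContinuousOn (fun p => K (F p)) {p | 0 < p.1} :=
    ContinuousOn.comp (fun s hs => (hK s hs).continuousAt.continuousWithinAt) hFc hmaps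
  have hHc : ContinuousOn (fun p => H (F p)) {p | 0 < p.1} :=
    ContinuousOn.comp (fun s hs => (hH s hs).continuousAt.continuousWithinAt) hFc hmaps
  have hgc : ContinuousOn (fun p => g (F p)) {p | 0 < p.1} := hg.comp hFc hmaps
  have hL := continuousOn_warpedLaplacian hF hFpos hV
  have hrr2 := (continuous_radialDeriv_radialDeriv hV).continuousOn (s := {p | 0 < p.1})
  have htt2 := (continuous_angularDeriv_angularDeriv hV).continuousOn (s := {p | 0 < p.1})
  have hV1 := contDiff_one_radialDeriv hV
  have hV2 := contDiff_one_angularDeriv hV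
  have hFd : ∀ p : ℝ × ℝ, 0 < p.1 → HasFDerivAt F (fderiv ℝ F p) p := fun p hp =>
    ((hF.differentiableOn one_ne_zero).differentiableAt (isOpen_fst_pos.mem_nhds hp)).hasFDerivAt
  have hint : IntegrableOn (fun p => g (F p) * warpedLaplacian F V p
        - (g (F p) - K (F p)) * radialDeriv (radialDeriv V) p
        - (g (F p) / F p ^ 2 + H (F p)) * angularDeriv (angularDeriv V) p)
        (Icc (r, a) (r', b)) := by
    refine ContinuousOn.integrableOn_compact isCompact_Icc (ContinuousOn.mono ?_ hsub)
    exact ((hgc.mul hL).sub ((hgc.sub hKc).mul hrr2)).sub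
      (((hgc.div (hFc.pow 2) fun p hp => pow_ne_zero _ (hFpos p hp).ne').add hHc).mul htt2)
  refine ⟨hint, ?_⟩
  let f' : ℝ × ℝ → ℝ × ℝ →L[ℝ] ℝ := fun p =>
    K (F p) • fderiv ℝ (radialDeriv V) p + radialDeriv V p • ((g (F p) / F p) • fderiv ℝ F p)
  let g' : ℝ × ℝ → ℝ × ℝ →L[ℝ] ℝ := fun p =>
    -(H (F p) • fderiv ℝ (angularDeriv V) p
      + angularDeriv V p • ((g (F p) / F p ^ 3) • fderiv ℝ F p))
  have heq : ∀ p ∈ Icc (r, a) (r', b), f' p (1, 0) + g' p (0, 1) =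
      g (F p) * warpedLaplacian F V p
        - (g (F p) - K (F p)) * radialDeriv (radialDeriv V) p
        - (g (F p) / F p ^ 2 + H (F p)) * angularDeriv (angularDeriv V) p := by
    intro p hp
    have hne : F p ≠ 0 := (hFpos p (hsub hp)).ne'
    simp only [f', g', warpedLaplacian, radialDeriv, angularDeriv, add_apply,
      neg_apply, smul_apply, smul_eq_mul]
    ring
  rw [← MeasureTheory.setIntegral_congr_fun measurableSet_Icc heq]
  rw [MeasureTheory.integral_divergence_prod_Icc_of_hasFDerivAt_of_le
    (fun p => K (F p) * radialDeriv V p) (fun p => -(H (F p) * angularDeriv V p)) f' g'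
    (r, a) (r', b) ⟨hrr, hab⟩ ((hKc.mul hV1.continuous.continuousOn).mono hsub)
    ((hHc.mul hV2.continuous.continuousOn).neg.mono hsub) ?_ ?_
    (hint.congr_fun (fun p hp => (heq p hp).symm) measurableSet_Icc)]
  · simp only [intervalIntegral.integral_neg]
    ring
  · intro p hp
    have hp0 : 0 < p.1 := hr.trans hp.1.1
    exact ((hK _ (hFpos p hp0)).comp_hasFDerivAt p (hFd p hp0)).mul
      ((hV1.differentiable one_ne_zero) p).hasFDerivAt
  · intro p hp
    have hp0 : 0 < p.1 := hr.trans hp.1.1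
    exact (((hH _ (hFpos p hp0)).comp_hasFDerivAt p (hFd p hp0)).mul
      ((hV2.differentiable one_ne_zero) p).hasFDerivAt).neg

/-- The primitive `K` of `g(s) / s` for the weight `g(s) = (s - 1)₊ (s + 1) / s`. -/
noncomputable def truncK (s : ℝ) : ℝ := max (s - 1) 0 ^ 2 / s

/-- The weight `g(s) = (s - 1/s)₊`. -/
noncomputable def truncG (s : ℝ) : ℝ := max (s - 1) 0 * (s + 1) / s

/-- The primitive of `g(s) / s³` vanishing on `(0, 1]` for the weight `g = truncG`. -/
noncomputable def truncH (s : ℝ) : ℝ := max (s - 1) 0 ^ 2 * (2 * s + 1) / (3 * s ^ 3)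

lemma hasDerivAt_max_pow (c x : ℝ) (n : ℕ) :
    HasDerivAt (fun t => max (t - c) 0 ^ (n + 2)) ((n + 2) * max (x - c) 0 ^ (n + 1)) x := by
  rcases lt_trichotomy x c with h | h | h
  · have : (fun t => max (t - c) 0 ^ (n + 2)) =ᶠ[nhds x] fun _ => 0 := by
      filter_upwards [Iio_mem_nhds h] with t ht
      rw [max_eq_right (by linarith [mem_Iio.mp ht])]; simp
    rw [max_eq_right (by linarith)]
    simpa using (hasDerivAt_const x (0 : ℝ)).congr_of_eventuallyEq this
  · subst h
    have : (fun t => max (t - x) 0 ^ (n + 2)) =O[nhds x] fun t => (t - x) ^ (n + 2) := by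
      refine Asymptotics.IsBigO.of_bound 1 (Eventually.of_forall fun t => ?_)
      rw [norm_pow, norm_pow, one_mul]
      refine pow_le_pow_left₀ (norm_nonneg _) ?_ _
      rw [Real.norm_eq_abs, Real.norm_eq_abs, abs_of_nonneg (le_max_right _ _)]
      exact max_le (le_abs_self _) (abs_nonneg _)
    have h2 : (fun t => max (t - x) 0 ^ (n + 2)) =o[nhds x] fun t => t - x := by
      refine this.trans_isLittleO ?_
      exact (Asymptotics.isLittleO_pow_id (𝕜 := ℝ) (n := n + 2) (by omega)).comp_tendsto
        (show Tendsto (fun t => t - x) (nhds x) (nhds 0) by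
          simpa using (continuous_id.sub continuous_const).tendsto (f := fun t : ℝ => t - x) x)
    rw [hasDerivAt_iff_isLittleO]
    simpa using h2
  · have : (fun t => max (t - c) 0 ^ (n + 2)) =ᶠ[nhds x] fun t => (t - c) ^ (n + 2) := by
      filter_upwards [Ioi_mem_nhds h] with t ht
      rw [max_eq_left (by linarith [mem_Ioi.mp ht])]
    rw [max_eq_left (by linarith)]
    refine ((((hasDerivAt_id' x).sub_const c).fun_pow (n + 2)).congr_of_eventuallyEq
      this).congr_deriv ?_
    simp

lemma hasDerivAt_truncK {s : ℝ} (hs : 0 < s) : HasDerivAt truncK (truncG s / s) s := by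
  have h := (hasDerivAt_max_pow 1 s 0).div (hasDerivAt_id s) hs.ne'
  refine h.congr_deriv ?_
  simp only [truncG, id, Nat.cast_zero, zero_add, pow_one]
  rcases le_total s 1 with h1 | h1
  · rw [max_eq_right (by linarith)]; simp
  · rw [max_eq_left (by linarith)]; field_simp; ring

lemma hasDerivAt_truncH {s : ℝ} (hs : 0 < s) : HasDerivAt truncH (truncG s / s ^ 3) s := by
  have h := ((hasDerivAt_max_pow 1 s 0).mul
    (((hasDerivAt_id s).const_mul 2).add_const 1)).div
    (((hasDerivAt_id s).pow 3).const_mul 3) (by simp; positivity)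
  refine h.congr_deriv ?_
  simp only [truncG, id, Nat.cast_zero, zero_add, pow_one, Pi.pow_apply]
  rcases le_total s 1 with h1 | h1
  · simp [max_eq_right (show s - 1 ≤ 0 by linarith)]
  · simp [max_eq_left (show 0 ≤ s - 1 by linarith)]; field_simp; ring

lemma continuousOn_truncG : ContinuousOn truncG (Ioi 0) := by
  unfold truncG
  exact ContinuousOn.div (by fun_prop) continuousOn_id fun s hs => (mem_Ioi.mp hs).ne'

lemma truncG_nonneg {s : ℝ} (hs : 0 < s) : 0 ≤ truncG s := by
  unfold truncG
  positivity

lemma truncK_eq_zero {s : ℝ} (hs : s ≤ 1) : truncK s = 0 := by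
  simp [truncK, max_eq_right (show s - 1 ≤ 0 by linarith)]

lemma truncH_eq_zero {s : ℝ} (hs : s ≤ 1) : truncH s = 0 := by
  simp [truncH, max_eq_right (show s - 1 ≤ 0 by linarith)]

lemma abs_sub_truncK_le {s : ℝ} (hs : 0 < s) : |s - truncK s| ≤ 2 := by
  rcases le_total s 1 with h | h
  · rw [truncK_eq_zero h, sub_zero, abs_of_pos hs]; linarith
  · have h0 : s - truncK s = 2 - 1 / s := by
      rw [truncK, max_eq_left (by linarith)]; field_simp; ring
    have h1 : 1 / s ≤ 1 := by rw [div_le_one hs]; exact h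
    have h2 : 0 < 1 / s := by positivity
    rw [h0, abs_le]; constructor <;> linarith

lemma abs_truncG_sub_truncK_le {s : ℝ} (hs : 0 < s) : |truncG s - truncK s| ≤ 2 := by
  rcases le_total s 1 with h | h
  · simp [truncG, truncK, max_eq_right (show s - 1 ≤ 0 by linarith)]
  · have h0 : truncG s - truncK s = 2 - 2 * (1 / s) := by
      rw [truncG, truncK, max_eq_left (by linarith)]; field_simp; ring
    have h1 : 1 / s ≤ 1 := by rw [div_le_one hs]; exact h
    have h2 : 0 < 1 / s := by positivity
    rw [h0, abs_le]; constructor <;> linarith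

lemma abs_truncH_le {s : ℝ} (hs : 0 < s) : |truncH s| ≤ 1 := by
  rcases le_total s 1 with h | h
  · simp [truncH_eq_zero h]
  · rw [truncH, max_eq_left (by linarith), abs_of_nonneg (by
      have : 0 ≤ s - 1 := by linarith
      positivity), div_le_one (by positivity)]
    nlinarith [pow_pos hs 2, pow_pos hs 3]

lemma abs_truncG_div_add_truncH_le {s : ℝ} (hs : 0 < s) :
    |truncG s / s ^ 2 + truncH s| ≤ 1 := by
  rcases le_total s 1 with h | h
  · simp [truncH_eq_zero h, truncG, max_eq_right (show s - 1 ≤ 0 by linarith)]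
  · have h0 : truncG s / s ^ 2 + truncH s = 2 / 3 - 2 / 3 * (1 / s ^ 3) := by
      rw [truncG, truncH, max_eq_left (by linarith)]; field_simp; ring
    have h1 : 1 / s ^ 3 ≤ 1 := by rw [div_le_one (by positivity)]; exact one_le_pow₀ h
    have h2 : 0 < 1 / s ^ 3 := by positivity
    rw [h0, abs_le]; constructor <;> linarith

/-- If `V` is subharmonic for `dr² + F² dθ²` and `F(r, θ)` is eventually at most `1` as `r → 0⁺`
for each `θ`, then the part of the radial flux of `V` carried by the region `F > 1` is bounded
below by a multiple of `-r`. -/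
lemma exists_le_integral_truncK {F V : ℝ × ℝ → ℝ} (hF : ContDiffOn ℝ 1 F {p | 0 < p.1})
    (hFpos : ∀ p : ℝ × ℝ, 0 < p.1 → 0 < F p)
    (hF1 : ∀ θ, ∀ᶠ r in nhdsWithin 0 (Ioi 0), F (r, θ) ≤ 1)
    (hV : ContDiff ℝ 2 V) (hsub : ∀ p : ℝ × ℝ, 0 < p.1 → 0 ≤ warpedLaplacian F V p)
    {ρ a b : ℝ} (hab : a ≤ b) :
    ∃ C, ∀ r ∈ Ioc 0 ρ, -C * r ≤ ∫ t in a..b, truncK (F (r, t)) * radialDeriv V (r, t) := by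
  have hcomp : IsCompact (Icc 0 ρ ×ˢ Icc a b) := isCompact_Icc.prod isCompact_Icc
  obtain ⟨C₁, hC₁⟩ := hcomp.exists_bound_of_continuousOn
    (continuous_radialDeriv_radialDeriv hV).continuousOn
  obtain ⟨C₂, hC₂⟩ := hcomp.exists_bound_of_continuousOn
    (continuous_angularDeriv_angularDeriv hV).continuousOn
  obtain ⟨C₃, hC₃⟩ := hcomp.exists_bound_of_continuousOn
    (contDiff_one_angularDeriv hV).continuous.continuousOn
  have hFc := hF.continuousOn
  have hmaps : MapsTo F {p | 0 < p.1} (Ioi 0) := fun p hp => hFpos p hp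
  have hKc : ContinuousOn (fun p => truncK (F p) * radialDeriv V p) {p | 0 < p.1} :=
    (ContinuousOn.comp (fun s hs => (hasDerivAt_truncK hs).continuousAt.continuousWithinAt)
      hFc hmaps).mul (contDiff_one_radialDeriv hV).continuous.continuousOn
  have hHc : ContinuousOn (fun p => truncH (F p) * angularDeriv V p) {p | 0 < p.1} :=
    (ContinuousOn.comp (fun s hs => (hasDerivAt_truncH hs).continuousAt.continuousWithinAt)
      hFc hmaps).mul (contDiff_one_angularDeriv hV).continuous.continuousOn
  have hFr : ∀ r > 0, Continuous fun t => truncK (F (r, t)) * radialDeriv V (r, t) :=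
    fun r hr => hKc.comp_continuous (f := fun t : ℝ => (r, t)) (by fun_prop) fun _ => hr
  have hFx : ∀ x, ContinuousOn (fun s => truncH (F (s, x)) * angularDeriv V (s, x)) (Ioi 0) :=
    fun x => hHc.comp (f := fun s : ℝ => (s, x)) (by fun_prop) fun s hs => hs
  have hHb : ∀ s ∈ Ioc 0 ρ, ∀ x ∈ Icc a b,
      ‖truncH (F (s, x)) * angularDeriv V (s, x)‖ ≤ C₃ := by
    intro s hs x hx
    have h1 := hC₃ (s, x) ⟨⟨hs.1.le, hs.2⟩, hx⟩
    have h2 := abs_truncH_le (hFpos (s, x) hs.1)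
    rw [norm_mul, Real.norm_eq_abs]
    calc _ ≤ 1 * C₃ := mul_le_mul h2 h1 (norm_nonneg _) zero_le_one
      _ = C₃ := one_mul _
  have hHint : ∀ x ∈ Icc a b, ∀ r ∈ Icc 0 ρ, ∀ r' ∈ Icc 0 ρ, r ≤ r' →
      IntervalIntegrable (fun s => truncH (F (s, x)) * angularDeriv V (s, x)) volume r r' := by
    intro x hx r hr r' hr' hrr
    rw [intervalIntegrable_iff_integrableOn_Ioc_of_le hrr]
    have hsub' : Ioc r r' ⊆ Ioc 0 ρ := Ioc_subset_Ioc hr.1 hr'.2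
    refine IntegrableOn.of_bound (C := C₃) (by simp)
      (((hFx x).mono fun s hs => hr.1.trans_lt hs.1).aestronglyMeasurable measurableSet_Ioc) ?_
    rw [ae_restrict_iff' measurableSet_Ioc]
    exact Eventually.of_forall fun s hs => hHb s (hsub' hs) x hx
  obtain ⟨C₀, hC₀⟩ : ∃ C₀, C₀ = 2 * C₁ + C₂ := ⟨_, rfl⟩
  obtain ⟨Φ, hΦ⟩ : ∃ Φ : ℝ → ℝ → ℝ, ∀ r x, Φ r x =
      (∫ t in a..x, truncK (F (r, t)) * radialDeriv V (r, t)) + C₀ * r * x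
        - ∫ s in (0)..r, truncH (F (s, x)) * angularDeriv V (s, x) := ⟨_, fun _ _ => rfl⟩
  have hdiff : ∀ r ∈ Ioc 0 ρ, ∀ x y, Φ r y - Φ r x =
      (∫ t in x..y, truncK (F (r, t)) * radialDeriv V (r, t)) + C₀ * r * (y - x)
        - ((∫ s in (0)..r, truncH (F (s, y)) * angularDeriv V (s, y))
          - ∫ s in (0)..r, truncH (F (s, x)) * angularDeriv V (s, x)) := by
    intro r hr x y
    have h := intervalIntegral.integral_add_adjacent_intervals
      ((hFr r hr.1).intervalIntegrable (μ := volume) a x)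
      ((hFr r hr.1).intervalIntegrable x y)
    rw [hΦ, hΦ, ← h]
    ring
  have hmono : ∀ r ∈ Ioc 0 ρ, MonotoneOn (Φ r) (Icc a b) := by
    refine monotoneOn_of_closed_cover
      (E := fun n : ℕ => {x | ∀ r ∈ Ioo (0 : ℝ) (1 / (n + 1)), F (r, x) ≤ 1})
      (δ := fun n : ℕ => 1 / (n + 1)) ?_ ?_ (fun n => by positivity) ?_ ?_ ?_
    · intro n
      have : {x | ∀ r ∈ Ioo (0 : ℝ) (1 / (n + 1)), F (r, x) ≤ 1}
          = ⋂ r ∈ Ioo (0 : ℝ) (1 / (n + 1)), {x | F (r, x) ≤ 1} := by ext; simp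
      rw [this]
      refine isClosed_biInter fun r hr => isClosed_le ?_ continuous_const
      exact hFc.comp_continuous (f := fun t : ℝ => (r, t)) (by fun_prop) fun _ => hr.1
    · intro x _
      obtain ⟨η, hη, h⟩ := mem_nhdsGT_iff_exists_Ioo_subset.mp (hF1 x)
      obtain ⟨n, hn⟩ := exists_nat_one_div_lt (mem_Ioi.mp hη)
      exact ⟨n, fun r hr => h ⟨hr.1, hr.2.trans hn⟩⟩
    · intro r hr
      have h1 : ContinuousOn (fun x => ∫ t in a..x, truncK (F (r, t)) * radialDeriv V (r, t))
          (Icc a b) :=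
        (intervalIntegral.continuous_primitive
          (fun _ _ => (hFr r hr.1).intervalIntegrable _ _) a).continuousOn
      have h2 : ContinuousOn (fun x => ∫ s in (0)..r, truncH (F (s, x)) * angularDeriv V (s, x))
          (Icc a b) := by
        intro x hx
        have hΙ : uIoc 0 r ⊆ Ioc 0 ρ := by
          rw [uIoc_of_le hr.1.le]; exact Ioc_subset_Ioc_right hr.2
        refine intervalIntegral.continuousWithinAt_of_dominated_interval (bound := fun _ => C₃)
          ?_ ?_ intervalIntegrable_const ?_
        · exact Eventually.of_forall fun y =>
            ((hFx y).mono fun s hs => (hΙ hs).1).aestronglyMeasurable measurableSet_uIoc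
        · filter_upwards [self_mem_nhdsWithin] with y hy
          exact Eventually.of_forall fun s hs => hHb s (hΙ hs) y hy
        · refine Eventually.of_forall fun s hs => ?_
          exact (hHc.comp_continuous (f := fun t : ℝ => (s, t)) (by fun_prop)
            fun _ => (hΙ hs).1).continuousWithinAt
      have h3 : Φ r = fun x => (∫ t in a..x, truncK (F (r, t)) * radialDeriv V (r, t))
          + C₀ * r * x - ∫ s in (0)..r, truncH (F (s, x)) * angularDeriv V (s, x) :=
        funext fun x => hΦ r x
      rw [h3]
      exact (h1.add (by fun_prop)).sub h2
    · intro r hr r' hr' hrr x hx y hy hxy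
      rw [hdiff r hr, hdiff r' hr']
      have hadj : ∀ z ∈ Icc a b,
          (∫ s in (0)..r', truncH (F (s, z)) * angularDeriv V (s, z)) =
          (∫ s in (0)..r, truncH (F (s, z)) * angularDeriv V (s, z)) +
          ∫ s in r..r', truncH (F (s, z)) * angularDeriv V (s, z) := fun z hz =>
        (intervalIntegral.integral_add_adjacent_intervals
          (hHint z hz 0 ⟨le_rfl, hr.1.le.trans hr.2⟩ r ⟨hr.1.le, hr.2⟩ hr.1.le)
          (hHint z hz r ⟨hr.1.le, hr.2⟩ r' ⟨hr'.1.le, hr'.2⟩ hrr)).symm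
      rw [hadj x hx, hadj y hy]
      obtain ⟨hint, hflux⟩ := integral_weighted_warpedLaplacian hF hFpos hV continuousOn_truncG
        (fun s hs => hasDerivAt_truncK hs) (fun s hs => hasDerivAt_truncH hs) hr.1 hrr hxy
      have hlow : ∫ _p in Icc (r, x) (r', y), -C₀ ≤ _ :=
        setIntegral_mono_on (integrableOn_const (by
          exact isCompact_Icc.measure_lt_top.ne)) hint measurableSet_Icc fun p hp => by
          have hp0 : 0 < p.1 := hr.1.trans_le hp.1.1
          have hpm : p ∈ Icc 0 ρ ×ˢ Icc a b :=
            ⟨⟨hp0.le, hp.2.1.trans hr'.2⟩, hx.1.trans hp.1.2, hp.2.2.trans hy.2⟩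
          have e1 := mul_nonneg (truncG_nonneg (hFpos p hp0)) (hsub p hp0)
          have e2 : |(truncG (F p) - truncK (F p)) * radialDeriv (radialDeriv V) p| ≤ 2 * C₁ := by
            rw [abs_mul]
            exact mul_le_mul (abs_truncG_sub_truncK_le (hFpos p hp0)) (hC₁ p hpm)
              (abs_nonneg _) zero_le_two
          have e3 : |(truncG (F p) / F p ^ 2 + truncH (F p))
              * angularDeriv (angularDeriv V) p| ≤ 1 * C₂ := by
            rw [abs_mul]
            exact mul_le_mul (abs_truncG_div_add_truncH_le (hFpos p hp0)) (hC₂ p hpm)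
              (abs_nonneg _) zero_le_one
          have e2' := (abs_le.mp e2).2
          have e3' := (abs_le.mp e3).2
          show -C₀ ≤ _
          linarith
      rw [hflux] at hlow
      have harea : ∫ _p in Icc (r, x) (r', y), -C₀ = -C₀ * ((r' - r) * (y - x)) := by
        rw [setIntegral_const, smul_eq_mul, mul_comm, ← Icc_prod_Icc, Measure.volume_eq_prod,
          measureReal_prod_prod, Real.volume_real_Icc_of_le hrr, Real.volume_real_Icc_of_le hxy]
      rw [harea] at hlow
      linarith
    · intro n r hr hrn x hx ε hε
      have hQ : ∀ y, (∀ s ∈ Ioo (0 : ℝ) (1 / (n + 1)), F (s, y) ≤ 1) →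
          ∫ s in (0)..r, truncH (F (s, y)) * angularDeriv V (s, y) = 0 := by
        intro y hy
        refine intervalIntegral.integral_zero_ae (Eventually.of_forall fun s hs => ?_)
        rw [uIoc_of_le hr.1.le] at hs
        rw [truncH_eq_zero (hy s ⟨hs.1, hs.2.trans_lt hrn⟩), zero_mul]
      have hderiv := (intervalIntegral.integral_hasDerivAt_right
        ((hFr r hr.1).intervalIntegrable (μ := volume) x x)
        ((hFr r hr.1).stronglyMeasurableAtFilter _ _) (hFr r hr.1).continuousAt)
      rw [truncK_eq_zero (hx.1 r ⟨hr.1, hrn⟩), zero_mul, hasDerivAt_iff_isLittleO] at hderiv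
      have hb := hderiv.bound hε
      filter_upwards [nhdsWithin_le_nhds hb, self_mem_nhdsWithin] with y hy hxy hyE
      rw [mem_Ioi] at hxy
      have h := hdiff r hr x y
      rw [hQ x hx.1, hQ y hyE.1] at h
      simp only [intervalIntegral.integral_same, sub_zero, smul_zero, Real.norm_eq_abs,
        abs_of_pos (sub_pos.mpr hxy)] at hy
      have h0 : 0 ≤ C₀ * r * (y - x) := by
        have hC0 : 0 ≤ C₀ := by
          have hm : ((r, x) : ℝ × ℝ) ∈ Icc 0 ρ ×ˢ Icc a b := ⟨⟨hr.1.le, hr.2⟩, hx.2⟩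
          have := (norm_nonneg _).trans (hC₁ _ hm)
          have := (norm_nonneg _).trans (hC₂ _ hm)
          rw [hC₀]; positivity
        exact mul_nonneg (mul_nonneg hC0 hr.1.le) (sub_pos.mpr hxy).le
      have := (abs_le.mp hy).1
      linarith
  refine ⟨C₀ * (b - a) + 2 * C₃, fun r hr => ?_⟩
  have h := hmono r hr (left_mem_Icc.mpr hab) (right_mem_Icc.mpr hab) hab
  have hd := hdiff r hr a b
  have hq : ∀ y ∈ Icc a b, |∫ s in (0)..r, truncH (F (s, y)) * angularDeriv V (s, y)| ≤ C₃ * r := by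
    intro y hy
    have := intervalIntegral.norm_integral_le_of_norm_le_const (a := 0) (b := r)
      (f := fun s => truncH (F (s, y)) * angularDeriv V (s, y)) (C := C₃) fun s hs => by
        rw [uIoc_of_le hr.1.le] at hs
        exact hHb s ⟨hs.1, hs.2.trans hr.2⟩ y hy
    rwa [sub_zero, abs_of_pos hr.1] at this
  have ha := abs_le.mp (hq a (left_mem_Icc.mpr hab))
  have hb := abs_le.mp (hq b (right_mem_Icc.mpr hab))
  linarith [ha.1, ha.2, hb.1, hb.2]

/-- The radial flux `∫ F V_r dθ` of a subharmonic function over a circle cannot be bounded above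
by a negative constant as the radius tends to `0`. -/
lemma exists_lt_integral_radial_flux {F V : ℝ × ℝ → ℝ} (hF : ContDiffOn ℝ 1 F {p | 0 < p.1})
    (hFpos : ∀ p : ℝ × ℝ, 0 < p.1 → 0 < F p)
    (hF0 : ∀ θ, Tendsto (fun r => F (r, θ)) (nhdsWithin 0 (Ioi 0)) (nhds 0))
    (hV : ContDiff ℝ 2 V) (hsub : ∀ p : ℝ × ℝ, 0 < p.1 → 0 ≤ warpedLaplacian F V p)
    {ρ a b c : ℝ} (hρ : 0 < ρ) (hab : a ≤ b) (hc : 0 < c) :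
    ∃ r ∈ Ioc 0 ρ, -c < ∫ t in a..b, F (r, t) * radialDeriv V (r, t) := by
  have hF1 : ∀ θ, ∀ᶠ r in nhdsWithin 0 (Ioi 0), F (r, θ) ≤ 1 := fun θ =>
    (hF0 θ).eventually_le_const one_pos
  obtain ⟨C, hC⟩ := exists_le_integral_truncK hF hFpos hF1 hV hsub (ρ := ρ) hab
  obtain ⟨D, hD⟩ := (isCompact_Icc.prod isCompact_Icc : IsCompact (Icc 0 ρ ×ˢ Icc a b))
    |>.exists_bound_of_continuousOn (contDiff_one_radialDeriv hV).continuous.continuousOn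
  have hFc := hF.continuousOn
  have hmaps : MapsTo F {p | 0 < p.1} (Ioi 0) := fun p hp => hFpos p hp
  have hKc : ContinuousOn (fun p => truncK (F p)) {p | 0 < p.1} :=
    ContinuousOn.comp (fun s hs => (hasDerivAt_truncK hs).continuousAt.continuousWithinAt)
      hFc hmaps
  have hVr := (contDiff_one_radialDeriv hV).continuous
  have hslice : ∀ {G : ℝ × ℝ → ℝ}, ContinuousOn G {p | 0 < p.1} → ∀ r > 0,
      Continuous fun t => G (r, t) := fun hG r hr =>
    hG.comp_continuous (f := fun t : ℝ => (r, t)) (by fun_prop) fun _ => hr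
  have hIoc : Ioc 0 ρ ∈ nhdsWithin (0 : ℝ) (Ioi 0) := Ioc_mem_nhdsGT hρ
  have hlim : Tendsto (fun r => ∫ t in a..b, (F (r, t) - truncK (F (r, t))) * radialDeriv V (r, t))
      (nhdsWithin 0 (Ioi 0)) (nhds (∫ _t in a..b, (0 : ℝ))) := by
    refine intervalIntegral.tendsto_integral_filter_of_dominated_convergence (fun _ => 2 * D)
      ?_ ?_ intervalIntegrable_const ?_
    · filter_upwards [hIoc] with r hr
      exact (hslice ((hFc.sub hKc).mul hVr.continuousOn) r hr.1).aestronglyMeasurable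
    · filter_upwards [hIoc] with r hr
      refine Eventually.of_forall fun t ht => ?_
      rw [uIoc_of_le hab] at ht
      rw [norm_mul]
      exact mul_le_mul (abs_sub_truncK_le (hFpos (r, t) hr.1))
        (hD (r, t) ⟨⟨hr.1.le, hr.2⟩, ht.1.le, ht.2⟩) (norm_nonneg _) zero_le_two
    · refine Eventually.of_forall fun t _ => ?_
      have h1 : Tendsto (fun r => F (r, t) * radialDeriv V (r, t)) (nhdsWithin 0 (Ioi 0))
          (nhds (0 * radialDeriv V (0, t))) :=
        (hF0 t).mul ((hVr.comp (f := fun r : ℝ => (r, t)) (by fun_prop)).tendsto 0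
          |>.mono_left nhdsWithin_le_nhds)
      rw [zero_mul] at h1
      refine h1.congr' ?_
      filter_upwards [hF1 t] with r hr
      rw [truncK_eq_zero hr, sub_zero]
  rw [intervalIntegral.integral_zero] at hlim
  have hlin : Tendsto (fun r : ℝ => -C * r) (nhdsWithin 0 (Ioi 0)) (nhds 0) := by
    have : Tendsto (fun r : ℝ => -C * r) (nhds 0) (nhds (-C * 0)) :=
      (continuous_const.mul continuous_id).tendsto 0
    rw [mul_zero] at this
    exact this.mono_left nhdsWithin_le_nhds
  have hsum := (hlin.add hlim).eventually_const_lt (show -c < 0 + 0 by linarith)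
  obtain ⟨r, hr, hrI⟩ := (hsum.and hIoc).exists
  refine ⟨r, hrI, hr.trans_le ?_⟩
  have hadd := intervalIntegral.integral_add (μ := volume) (a := a) (b := b)
    ((hslice (hKc.mul hVr.continuousOn) r hrI.1).intervalIntegrable a b)
    ((hslice ((hFc.sub hKc).mul hVr.continuousOn) r hrI.1).intervalIntegrable a b)
  have hcongr : ∀ t, truncK (F (r, t)) * radialDeriv V (r, t)
      + (F (r, t) - truncK (F (r, t))) * radialDeriv V (r, t)
      = F (r, t) * radialDeriv V (r, t) := fun t => by ring
  simp only [Pi.mul_apply, Pi.sub_apply, hcongr] at hadd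
  rw [hadd]
  have := hC r hrI
  linarith

lemma DifferentiableAt.hasDerivAt_radialDeriv {V : ℝ × ℝ → ℝ} {r θ : ℝ}
    (hV : DifferentiableAt ℝ V (r, θ)) :
    HasDerivAt (fun s => V (s, θ)) (radialDeriv V (r, θ)) r :=
  hV.hasFDerivAt.comp_hasDerivAt r ((hasDerivAt_id r).prodMk (hasDerivAt_const r θ))

lemma DifferentiableAt.hasDerivAt_angularDeriv {V : ℝ × ℝ → ℝ} {r θ : ℝ}
    (hV : DifferentiableAt ℝ V (r, θ)) :
    HasDerivAt (fun t => V (r, t)) (angularDeriv V (r, θ)) θ :=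
  hV.hasFDerivAt.comp_hasDerivAt θ ((hasDerivAt_const θ r).prodMk (hasDerivAt_id θ))

lemma warpedLaplacian_comp {F V : ℝ × ℝ → ℝ} (hV : ContDiff ℝ 2 V) {Ψ Ψ' Ψ'' : ℝ → ℝ}
    (hΨ : ∀ t, HasDerivAt Ψ (Ψ' t) t) (hΨ' : ∀ t, HasDerivAt Ψ' (Ψ'' t) t) (p : ℝ × ℝ) :
    warpedLaplacian F (fun q => Ψ (V q)) p = Ψ' (V p) * warpedLaplacian F V p
      + Ψ'' (V p) * (radialDeriv V p ^ 2 + angularDeriv V p ^ 2 / F p ^ 2) := by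
  have hd : Differentiable ℝ V := hV.differentiable two_ne_zero
  have h1 : ∀ q, fderiv ℝ (fun q => Ψ (V q)) q = Ψ' (V q) • fderiv ℝ V q := fun q =>
    ((hΨ (V q)).comp_hasFDerivAt q (hd q).hasFDerivAt).fderiv
  have hr : radialDeriv (fun q => Ψ (V q)) = fun q => Ψ' (V q) * radialDeriv V q := by
    ext q; simp [radialDeriv, h1]
  have ht : angularDeriv (fun q => Ψ (V q)) = fun q => Ψ' (V q) * angularDeriv V q := by
    ext q; simp [angularDeriv, h1]
  have h2 : ∀ G : ℝ × ℝ → ℝ, DifferentiableAt ℝ G p → fderiv ℝ (fun q => Ψ' (V q) * G q) p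
      = Ψ' (V p) • fderiv ℝ G p + G p • Ψ'' (V p) • fderiv ℝ V p := fun G hG =>
    (((hΨ' (V p)).comp_hasFDerivAt p (hd p).hasFDerivAt).mul hG.hasFDerivAt).fderiv
  have hrr : radialDeriv (fun q => Ψ' (V q) * radialDeriv V q) p
      = Ψ' (V p) * radialDeriv (radialDeriv V) p + Ψ'' (V p) * radialDeriv V p ^ 2 := by
    rw [radialDeriv, h2 _ ((contDiff_one_radialDeriv hV).differentiable one_ne_zero p)]
    simp only [add_apply, smul_apply, smul_eq_mul]
    simp only [radialDeriv]
    ring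
  have htt : angularDeriv (fun q => Ψ' (V q) * angularDeriv V q) p
      = Ψ' (V p) * angularDeriv (angularDeriv V) p + Ψ'' (V p) * angularDeriv V p ^ 2 := by
    rw [angularDeriv, h2 _ ((contDiff_one_angularDeriv hV).differentiable one_ne_zero p)]
    simp only [add_apply, smul_apply, smul_eq_mul]
    simp only [angularDeriv]
    ring
  simp only [warpedLaplacian, hr, ht, hrr, htt]
  ring

lemma contDiff_two_max_pow_three (m : ℝ) : ContDiff ℝ 2 fun t : ℝ => max (t - m) 0 ^ 3 := by
  have h1 : deriv (fun t : ℝ => max (t - m) 0 ^ 3) = fun t => 3 * max (t - m) 0 ^ 2 := by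
    ext t
    have := (hasDerivAt_max_pow m t 1).deriv
    norm_num at this
    exact this
  have h2 : deriv (fun t : ℝ => max (t - m) 0 ^ 2) = fun t => 2 * max (t - m) 0 := by
    ext t
    have := (hasDerivAt_max_pow m t 0).deriv
    norm_num at this
    exact this
  have hC1 : ContDiff ℝ 1 fun t : ℝ => max (t - m) 0 ^ 2 := by
    rw [contDiff_one_iff_deriv, h2]
    exact ⟨fun t => (hasDerivAt_max_pow m t 0).differentiableAt, by fun_prop⟩
  have : ContDiff ℝ (1 + 1) fun t : ℝ => max (t - m) 0 ^ 3 := by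
    rw [contDiff_succ_iff_deriv, h1]
    exact ⟨fun t => (hasDerivAt_max_pow m t 1).differentiableAt, by simp, contDiff_const.mul hC1⟩
  norm_num at this
  exact this

lemma setIntegral_pos_of_continuousOn {G : ℝ × ℝ → ℝ} {p q : ℝ × ℝ}
    (hG : ContinuousOn G (Icc p q)) (h0 : ∀ z ∈ Icc p q, 0 ≤ G z) {z : ℝ × ℝ}
    (hz : z ∈ Ioo p.1 q.1 ×ˢ Ioo p.2 q.2) (hGz : 0 < G z) : 0 < ∫ z in Icc p q, G z := by
  have hsub : Ioo p.1 q.1 ×ˢ Ioo p.2 q.2 ⊆ Icc p q := fun w hw =>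
    ⟨⟨hw.1.1.le, hw.2.1.le⟩, hw.1.2.le, hw.2.2.le⟩
  rw [setIntegral_pos_iff_support_of_nonneg_ae _ (hG.integrableOn_compact isCompact_Icc)]
  · have hopen : IsOpen (Ioo p.1 q.1 ×ˢ Ioo p.2 q.2 ∩ G ⁻¹' Ioi 0) :=
      (hG.mono hsub).isOpen_inter_preimage (isOpen_Ioo.prod isOpen_Ioo) isOpen_Ioi
    refine (hopen.measure_pos volume ⟨z, hz, hGz⟩).trans_le (measure_mono fun w hw => ?_)
    exact ⟨(mem_Ioi.mp hw.2).ne', hsub hw.1⟩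
  · rw [EventuallyLE, ae_restrict_iff' measurableSet_Icc]
    exact Eventually.of_forall h0

/-- The maximum over circles of a subharmonic function is nondecreasing in the radius. -/
lemma le_of_forall_le_of_subharmonic {F V : ℝ × ℝ → ℝ} (hF : ContDiffOn ℝ 1 F {p | 0 < p.1})
    (hFpos : ∀ p : ℝ × ℝ, 0 < p.1 → 0 < F p)
    (hFper : ∀ r, Function.Periodic (fun t => F (r, t)) (2 * π))
    (hF0 : ∀ θ, Tendsto (fun r => F (r, θ)) (nhdsWithin 0 (Ioi 0)) (nhds 0))
    (hV : ContDiff ℝ 2 V) (hVper : ∀ r, Function.Periodic (fun t => V (r, t)) (2 * π))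
    (hsub : ∀ p : ℝ × ℝ, 0 < p.1 → 0 ≤ warpedLaplacian F V p)
    {r₁ r₂ m : ℝ} (hr₁ : 0 < r₁) (hr : r₁ < r₂) (hm : ∀ θ, V (r₂, θ) ≤ m) (θ : ℝ) :
    V (r₁, θ) ≤ m := by
  by_contra! hθ
  have hΨ : ∀ t, HasDerivAt (fun t => max (t - m) 0 ^ 3) (3 * max (t - m) 0 ^ 2) t := fun t =>
    (hasDerivAt_max_pow m t 1).congr_deriv (by norm_num)
  have hΨ' : ∀ t, HasDerivAt (fun t => 3 * max (t - m) 0 ^ 2) (6 * max (t - m) 0) t := fun t =>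
    ((hasDerivAt_max_pow m t 0).const_mul 3).congr_deriv (by push_cast; ring)
  have hVd : Differentiable ℝ V := hV.differentiable two_ne_zero
  obtain ⟨W, hWdef⟩ : ∃ W : ℝ × ℝ → ℝ, W = fun p => max (V p - m) 0 ^ 3 := ⟨_, rfl⟩
  have hW : ContDiff ℝ 2 W := hWdef ▸ (contDiff_two_max_pow_three m).comp hV
  have hWd : Differentiable ℝ W := hW.differentiable two_ne_zero
  have hWr : ∀ p, radialDeriv W p = 3 * max (V p - m) 0 ^ 2 * radialDeriv V p := fun p => by
    have h : HasFDerivAt W ((3 * max (V p - m) 0 ^ 2) • fderiv ℝ V p) p :=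
      hWdef ▸ (hΨ (V p)).comp_hasFDerivAt p (hVd p).hasFDerivAt
    rw [radialDeriv, h.fderiv]
    rfl
  have hLW : ∀ p, warpedLaplacian F W p = 3 * max (V p - m) 0 ^ 2 * warpedLaplacian F V p
      + 6 * max (V p - m) 0 * (radialDeriv V p ^ 2 + angularDeriv V p ^ 2 / F p ^ 2) := fun p => by
    rw [hWdef]; exact warpedLaplacian_comp hV hΨ hΨ' p
  have hLW0 : ∀ p : ℝ × ℝ, 0 < p.1 → 0 ≤ warpedLaplacian F W p := fun p hp => by
    rw [hLW]
    have := hsub p hp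
    have : 0 ≤ max (V p - m) 0 := le_max_right _ _
    positivity
  have hGc : ContinuousOn (fun p => F p * warpedLaplacian F W p) {p | 0 < p.1} :=
    hF.continuousOn.mul (continuousOn_warpedLaplacian hF hFpos hW)
  have hG0 : ∀ p : ℝ × ℝ, 0 < p.1 → 0 ≤ F p * warpedLaplacian F W p := fun p hp =>
    mul_nonneg (hFpos p hp).le (hLW0 p hp)
  -- a ray along which `V - m` becomes positive
  obtain ⟨θ₁, hθ₁, hVθ₁⟩ : ∃ t ∈ Ioo 0 (2 * π), m < V (r₁, t) := by
    obtain ⟨y, hy, hyV⟩ := (hVper r₁).exists_mem_Ico₀ two_pi_pos θ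
    have hy' : m < V (r₁, y) := by simpa only [hyV] using hθ
    have hc : Continuous fun t => V (r₁, t) := hV.continuous.comp (by fun_prop)
    have he : ∀ᶠ t in nhdsWithin y (Ioi y), m < V (r₁, t) :=
      nhdsWithin_le_nhds (hc.continuousAt.eventually_const_lt hy')
    obtain ⟨t, ht, ht'⟩ := (he.and (Ioo_mem_nhdsGT hy.2)).exists
    exact ⟨t, ⟨hy.1.trans_lt ht'.1, ht'.2⟩, ht⟩
  obtain ⟨s, hs, hsW⟩ := exists_hasDerivAt_eq_slope (fun s => W (s, θ₁))
    (fun s => radialDeriv W (s, θ₁)) hr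
    (hW.continuous.comp (by fun_prop : Continuous fun s : ℝ => (s, θ₁))).continuousOn
    fun s _ => (hWd (s, θ₁)).hasDerivAt_radialDeriv
  have hs0 : 0 < s := hr₁.trans hs.1
  have hW2 : W (r₂, θ₁) = 0 := by
    simp [hWdef, hm θ₁]
  have hW1 : 0 < W (r₁, θ₁) := by
    rw [hWdef]
    exact pow_pos (lt_max_of_lt_left (sub_pos.mpr hVθ₁)) 3
  have hsne : radialDeriv W (s, θ₁) ≠ 0 := by
    simp only [hW2] at hsW
    rw [hsW]
    exact div_ne_zero (by linarith) (by linarith)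
  rw [hWr] at hsne
  have hmaxpos : 0 < max (V (s, θ₁) - m) 0 :=
    lt_of_le_of_ne (le_max_right _ _) fun h => hsne (by rw [← h]; ring)
  have hVrne : radialDeriv V (s, θ₁) ≠ 0 := fun h => hsne (by rw [h]; ring)
  have hGs : 0 < F (s, θ₁) * warpedLaplacian F W (s, θ₁) := by
    have := hsub (s, θ₁) hs0
    have := hFpos (s, θ₁) hs0
    rw [hLW]
    positivity
  have hc : 0 < ∫ p in Icc (r₁, 0) (r₂, 2 * π), F p * warpedLaplacian F W p :=
    setIntegral_pos_of_continuousOn (hGc.mono fun p hp => hr₁.trans_le hp.1.1)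
      (fun p hp => hG0 p (hr₁.trans_le hp.1.1)) (z := (s, θ₁)) ⟨hs, hθ₁⟩ hGs
  obtain ⟨r, hrI, hflux⟩ :=
    exists_lt_integral_radial_flux hF hFpos hF0 hW hLW0 hr₁ two_pi_pos.le hc
  obtain ⟨hint, hdiv⟩ := integral_weighted_warpedLaplacian hF hFpos hW (g := fun s => s)
    (K := fun s => s) (H := fun s => -s⁻¹) continuousOn_id
    (fun s hs => by rw [div_self hs.ne']; exact hasDerivAt_id s)
    (fun s hs => (hasDerivAt_inv hs.ne').neg.congr_deriv (by field_simp)) hrI.1 (hrI.2.trans hr.le) two_pi_pos.le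
  have hWper : ∀ x, angularDeriv W (x, 2 * π) = angularDeriv W (x, 0) := by
    intro x
    have h1 := (hWd (x, 0 + 2 * π)).hasDerivAt_angularDeriv.comp_add_const 0 (2 * π)
    have h2 := (hWd (x, 0)).hasDerivAt_angularDeriv
    have h3 : (fun t => W (x, t + 2 * π)) = fun t => W (x, t) := by
      ext t
      have := hVper x t
      simp only at this
      simp only [hWdef, this]
    rw [h3, zero_add] at h1
    exact h1.unique h2
  have hFper' : ∀ x, F (x, 2 * π) = F (x, 0) := fun x => by simpa using hFper x 0
  have hbd : ∀ t, F (r₂, t) * radialDeriv W (r₂, t) = 0 := fun t => by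
    rw [hWr, max_eq_right (by linarith [hm t])]; ring
  have hcongr : ∀ p ∈ Icc (r, 0) (r₂, 2 * π), F p * warpedLaplacian F W p
        - (F p - F p) * radialDeriv (radialDeriv W) p
        - (F p / F p ^ 2 + -(F p)⁻¹) * angularDeriv (angularDeriv W) p
      = F p * warpedLaplacian F W p := fun p hp => by
    have := (hFpos p (hrI.1.trans_le hp.1.1)).ne'
    field_simp
    ring
  rw [setIntegral_congr_fun measurableSet_Icc hcongr] at hdiv
  simp only [hbd, hWper, hFper', sub_self, intervalIntegral.integral_zero, zero_sub,
    sub_zero] at hdiv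
  have hmono : ∫ p in Icc (r₁, 0) (r₂, 2 * π), F p * warpedLaplacian F W p
      ≤ ∫ p in Icc (r, 0) (r₂, 2 * π), F p * warpedLaplacian F W p := by
    refine setIntegral_mono_set
      ((hGc.mono fun p hp => hrI.1.trans_le hp.1.1).integrableOn_compact isCompact_Icc) ?_
      (Eventually.of_forall (Icc_subset_Icc_left ⟨hrI.2, le_rfl⟩))
    rw [EventuallyLE, ae_restrict_iff' measurableSet_Icc]
    exact Eventually.of_forall fun p hp => hG0 p (hrI.1.trans_le hp.1.1)
  linarith

/-- The second derivative is nonpositive at a local maximum. -/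
lemma IsLocalMax.hasDerivAt_hasDerivAt_nonpos {φ φ' : ℝ → ℝ} {x c : ℝ} (hmax : IsLocalMax φ x)
    (hφ : ∀ᶠ y in nhds x, HasDerivAt φ (φ' y) y) (hφ' : HasDerivAt φ' c x) : c ≤ 0 := by
  by_contra! hc
  have heq : deriv φ =ᶠ[nhds x] φ' := hφ.mono fun y hy => hy.deriv
  have hdd : deriv (deriv φ) x = c := by rw [heq.deriv_eq, hφ'.deriv]
  have hmin := isLocalMin_of_deriv_deriv_pos (hdd ▸ hc) hmax.deriv_eq_zero
    hφ.self_of_nhds.continuousAt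
  have hconst : φ =ᶠ[nhds x] fun _ => φ x := by
    filter_upwards [hmax, hmin] with y h1 h2 using le_antisymm h1 h2
  have h0 : deriv φ =ᶠ[nhds x] fun _ => 0 := by
    filter_upwards [hconst.eventuallyEq_nhds] with y hy
    rw [hy.deriv_eq, deriv_const]
  rw [h0.deriv_eq, deriv_const] at hdd
  exact hc.ne hdd

/-- Comparison of a subharmonic function with a radial strict supersolution on an annulus. -/
lemma le_of_radial_supersolution {F V : ℝ × ℝ → ℝ}
    (hV : ContDiff ℝ 2 V) (hVper : ∀ r, Function.Periodic (fun t => V (r, t)) (2 * π))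
    {r₁ r₂ : ℝ} (hsub : ∀ r ∈ Ioo r₁ r₂, ∀ θ, 0 ≤ warpedLaplacian F V (r, θ))
    {P P' P'' : ℝ → ℝ} (hPc : ContinuousOn P (Icc r₁ r₂))
    (hP : ∀ r ∈ Ioo r₁ r₂, HasDerivAt P (P' r) r)
    (hP' : ∀ r ∈ Ioo r₁ r₂, HasDerivAt P' (P'' r) r)
    (hneg : ∀ r ∈ Ioo r₁ r₂, ∀ θ, P'' r + radialDeriv F (r, θ) / F (r, θ) * P' r < 0)
    (hb₁ : ∀ θ, V (r₁, θ) ≤ P r₁) (hb₂ : ∀ θ, V (r₂, θ) ≤ P r₂)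
    {r : ℝ} (hr : r ∈ Icc r₁ r₂) (θ : ℝ) : V (r, θ) ≤ P r := by
  have hVd : Differentiable ℝ V := hV.differentiable two_ne_zero
  obtain ⟨⟨s, t⟩, ⟨hs, -⟩, hst⟩ :=
    (isCompact_Icc.prod isCompact_Icc : IsCompact (Icc r₁ r₂ ×ˢ Icc 0 (2 * π))).exists_isMaxOn
      ⟨(r, 0), hr, left_mem_Icc.mpr two_pi_pos.le⟩ (f := fun p : ℝ × ℝ => V p - P p.1)
      (hV.continuous.continuousOn.sub (hPc.comp continuousOn_fst fun p hp => hp.1))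
  have hmax : ∀ s' ∈ Icc r₁ r₂, ∀ t', V (s', t') - P s' ≤ V (s, t) - P s := by
    intro s' hs' t'
    obtain ⟨y, hy, hyV⟩ := (hVper s').exists_mem_Ico₀ two_pi_pos t'
    have : V (s', y) - P s' ≤ V (s, t) - P s := hst ⟨hs', hy.1, hy.2.le⟩
    rwa [← hyV] at this
  suffices h : V (s, t) ≤ P s by linarith [hmax r hr θ]
  rcases hs.1.eq_or_lt with rfl | h₁
  · exact hb₁ t
  rcases hs.2.eq_or_lt with rfl | h₂
  · exact hb₂ t
  exfalso
  have hsI : s ∈ Ioo r₁ r₂ := ⟨h₁, h₂⟩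
  have hnhds : Ioo r₁ r₂ ∈ nhds s := Ioo_mem_nhds h₁ h₂
  have hdr : ∀ y ∈ Ioo r₁ r₂, HasDerivAt (fun y => V (y, t) - P y)
      (radialDeriv V (y, t) - P' y) y := fun y hy =>
    (hVd (y, t)).hasDerivAt_radialDeriv.sub (hP y hy)
  have hmr : IsLocalMax (fun y => V (y, t) - P y) s := by
    filter_upwards [hnhds] with y hy using hmax y (Ioo_subset_Icc_self hy) t
  have hmt : IsLocalMax (fun y => V (s, y)) t :=
    Eventually.of_forall fun y => by simpa using hmax s hs y
  have hr1 : radialDeriv V (s, t) - P' s = 0 := hmr.hasDerivAt_eq_zero (hdr s hsI)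
  have hr2 : radialDeriv (radialDeriv V) (s, t) - P'' s ≤ 0 :=
    hmr.hasDerivAt_hasDerivAt_nonpos (by filter_upwards [hnhds] with y hy using hdr y hy)
      (((contDiff_one_radialDeriv hV).differentiable one_ne_zero _).hasDerivAt_radialDeriv.sub
        (hP' s hsI))
  have ht1 : angularDeriv V (s, t) = 0 :=
    hmt.hasDerivAt_eq_zero (hVd (s, t)).hasDerivAt_angularDeriv
  have ht2 : angularDeriv (angularDeriv V) (s, t) ≤ 0 :=
    hmt.hasDerivAt_hasDerivAt_nonpos
      (Eventually.of_forall fun y => (hVd (s, y)).hasDerivAt_angularDeriv)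
      ((contDiff_one_angularDeriv hV).differentiable one_ne_zero _).hasDerivAt_angularDeriv
  have hL := hsub s hsI t
  have hN := hneg s hsI t
  rw [warpedLaplacian, ht1, sub_eq_zero.mp hr1] at hL
  have := div_nonpos_of_nonpos_of_nonneg ht2 (sq_nonneg (F (s, t)))
  linarith

lemma contDiff_comp_polar {u : ℝ × ℝ → ℝ} (hu : ContDiff ℝ 2 u) :
    ContDiff ℝ 2 fun p : ℝ × ℝ => u (p.1 * cos p.2, p.1 * sin p.2) :=
  hu.comp ((contDiff_fst.mul (contDiff_cos.comp contDiff_snd)).prodMk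
    (contDiff_fst.mul (contDiff_sin.comp contDiff_snd)))

lemma periodic_comp_polar (u : ℝ × ℝ → ℝ) (r : ℝ) :
    Function.Periodic (fun t => u (r * cos t, r * sin t)) (2 * π) := fun t => by
  simp only [cos_add_two_pi, sin_add_two_pi]

lemma polarLaplacian_eq_warpedLaplacian {f : ℝ → ℝ → ℝ} {u : ℝ × ℝ → ℝ} {r θ : ℝ}
    (hf : DifferentiableAt ℝ (fun p : ℝ × ℝ => f p.1 p.2) (r, θ)) (hu : ContDiff ℝ 2 u) :
    polarLaplacian f u r θ = warpedLaplacian (fun p => f p.1 p.2)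
      (fun p => u (p.1 * cos p.2, p.1 * sin p.2)) (r, θ) := by
  have hV := contDiff_comp_polar hu
  obtain ⟨V, hVdef⟩ : ∃ V : ℝ × ℝ → ℝ, V = fun p => u (p.1 * cos p.2, p.1 * sin p.2) := ⟨_, rfl⟩
  rw [← hVdef] at hV ⊢
  have hVd : Differentiable ℝ V := hV.differentiable two_ne_zero
  have hr : deriv (fun s => u (s * cos θ, s * sin θ)) = fun s => radialDeriv V (s, θ) := by
    ext s
    rw [← (hVd (s, θ)).hasDerivAt_radialDeriv.deriv, hVdef]
  have ht : deriv (fun t => u (r * cos t, r * sin t)) = fun t => angularDeriv V (r, t) := by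
    ext t
    rw [← (hVd (r, t)).hasDerivAt_angularDeriv.deriv, hVdef]
  have hrr := ((contDiff_one_radialDeriv hV).differentiable one_ne_zero
    (r, θ)).hasDerivAt_radialDeriv.deriv
  have htt := ((contDiff_one_angularDeriv hV).differentiable one_ne_zero
    (r, θ)).hasDerivAt_angularDeriv.deriv
  rw [polarLaplacian, warpedLaplacian, hr, ht, hrr, htt, hf.hasDerivAt_radialDeriv.deriv,
    hf.hasDerivAt_angularDeriv.deriv]
  ring

lemma le_Mmax {u : ℝ × ℝ → ℝ} (hu : Continuous u) (r θ : ℝ) :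
    u (r * cos θ, r * sin θ) ≤ Mmax u r := by
  obtain ⟨y, hy, hyu⟩ := (periodic_comp_polar u r).exists_mem_Ico₀ two_pi_pos θ
  have hc : Continuous fun t => u (r * cos t, r * sin t) := by fun_prop
  have hbdd : BddAbove ((fun t => u (r * cos t, r * sin t)) '' Ico 0 (2 * π)) :=
    (isCompact_Icc.image hc).bddAbove.mono (image_mono Ico_subset_Icc_self)
  exact hyu.trans_le (le_csSup hbdd (mem_image_of_mem _ hy))

lemma Mmax_le {u : ℝ × ℝ → ℝ} {r m : ℝ} (h : ∀ θ, u (r * cos θ, r * sin θ) ≤ m) :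
    Mmax u r ≤ m := by
  refine csSup_le (nonempty_Ico.mpr two_pi_pos |>.image _) ?_
  rintro _ ⟨θ, -, rfl⟩
  exact h θ

/-- The three-circles comparison with the radial profile `log (log r)`. -/
lemma le_add_mul_loglog {F V : ℝ × ℝ → ℝ}
    (hV : ContDiff ℝ 2 V) (hVper : ∀ r, Function.Periodic (fun t => V (r, t)) (2 * π))
    {r₁ r₂ : ℝ} (hr₁ : 1 < r₁)
    (hsub : ∀ r ∈ Ioo r₁ r₂, ∀ θ, 0 ≤ warpedLaplacian F V (r, θ))
    (hmean : ∀ r ∈ Ioo r₁ r₂, ∀ θ,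
      radialDeriv F (r, θ) / F (r, θ) ≤ (1 + log r) / (r * log r))
    {m b : ℝ} (hb : 0 ≤ b) (hb₁ : ∀ θ, V (r₁, θ) ≤ m)
    (hb₂ : ∀ θ, V (r₂, θ) ≤ m + b * (log (log r₂) - log (log r₁)))
    {r : ℝ} (hr : r ∈ Icc r₁ r₂) (θ : ℝ) :
    V (r, θ) ≤ m + b * (log (log r) - log (log r₁)) := by
  have hlog : ∀ s, r₁ ≤ s → 0 < log s := fun s hs => log_pos (hr₁.trans_le hs)
  have hpos : ∀ s, r₁ ≤ s → 0 < s := fun s hs => (zero_lt_one.trans hr₁).trans_le hs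
  have hd1 : ∀ s, r₁ ≤ s → HasDerivAt (fun s => log (log s)) (s * log s)⁻¹ s := fun s hs =>
    ((hasDerivAt_log (hpos s hs).ne').log (hlog s hs).ne').congr_deriv (by
      rw [mul_inv, div_eq_mul_inv])
  have hd2 : ∀ s, r₁ ≤ s → HasDerivAt (fun s => (s * log s)⁻¹)
      (-(1 + log s) / (s * log s) ^ 2) s := fun s hs =>
    (((hasDerivAt_id s).mul (hasDerivAt_log (hpos s hs).ne')).inv
      (mul_pos (hpos s hs) (hlog s hs)).ne').congr_deriv (by
        have := (hpos s hs).ne'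
        simp only [id, one_mul, mul_inv_cancel₀ this, Pi.mul_apply]
        rw [add_comm])
  obtain ⟨h, hh⟩ : ∃ h : ℝ → ℝ, h = fun s => log (log s) := ⟨_, rfl⟩
  have hmono : ∀ s ∈ Icc r₁ r₂, h s ≤ h r₂ := fun s hs => by
    rw [hh]
    exact log_le_log (hlog s hs.1) (log_le_log (hpos s hs.1) hs.2)
  have key : ∀ δ > 0, V (r, θ) ≤ m + b * (h r - h r₁)
      + δ * ((h r₂ - h r₁) ^ 2 - (h r₂ - h r) ^ 2) := by
    intro δ hδ
    have hP : ∀ s, r₁ ≤ s → HasDerivAt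
        (fun s => m + b * (h s - h r₁) + δ * ((h r₂ - h r₁) ^ 2 - (h r₂ - h s) ^ 2))
        ((b + 2 * δ * (h r₂ - h s)) * (s * log s)⁻¹) s := fun s hs => by
      have e := hd1 s hs
      rw [← hh] at e
      exact ((((e.sub_const (h r₁)).const_mul b).const_add m).add
        ((((e.const_sub (h r₂)).pow 2).const_sub ((h r₂ - h r₁) ^ 2)).const_mul δ)).congr_deriv
          (by push_cast; ring)
    have hP' : ∀ s, r₁ ≤ s → HasDerivAt (fun s => (b + 2 * δ * (h r₂ - h s)) * (s * log s)⁻¹)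
        (2 * δ * -(s * log s)⁻¹ * (s * log s)⁻¹
          + (b + 2 * δ * (h r₂ - h s)) * (-(1 + log s) / (s * log s) ^ 2)) s := fun s hs => by
      have e := hd1 s hs
      rw [← hh] at e
      exact (((e.const_sub (h r₂)).const_mul (2 * δ)).const_add b).mul (hd2 s hs)
    refine le_of_radial_supersolution hV hVper hsub
      (fun s hs => (hP s hs.1).continuousAt.continuousWithinAt) (fun s hs => hP s hs.1.le)
      (fun s hs => hP' s hs.1.le) (fun s hs t => ?_) (fun t => ?_) (fun t => ?_) hr θ
    · have hw : 0 < s * log s := mul_pos (hpos s hs.1.le) (hlog s hs.1.le)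
      have hB : 0 ≤ b + 2 * δ * (h r₂ - h s) :=
        add_nonneg hb (mul_nonneg (by positivity)
          (sub_nonneg.mpr (hmono s (Ioo_subset_Icc_self hs))))
      have hk := mul_le_mul_of_nonneg_right (hmean s hs t)
        (mul_nonneg hB (inv_pos.mpr hw).le)
      have hcancel : (b + 2 * δ * (h r₂ - h s)) * (-(1 + log s) / (s * log s) ^ 2)
          + (1 + log s) / (s * log s) * ((b + 2 * δ * (h r₂ - h s)) * (s * log s)⁻¹) = 0 := by
        generalize s * log s = w at hw
        have := hw.ne'
        field_simp
        ring
      have hstrict : 0 < 2 * δ * (s * log s)⁻¹ * (s * log s)⁻¹ := by positivity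
      linarith
    · simpa using hb₁ t
    · have := hb₂ t
      simp only [hh]
      nlinarith [mul_nonneg hδ.le (sq_nonneg (log (log r₂) - log (log r₁)))]
  have hlim : Tendsto (fun δ => m + b * (h r - h r₁)
      + δ * ((h r₂ - h r₁) ^ 2 - (h r₂ - h r) ^ 2)) (nhdsWithin 0 (Ioi 0))
      (nhds (m + b * (h r - h r₁) + 0 * ((h r₂ - h r₁) ^ 2 - (h r₂ - h r) ^ 2))) :=
    ((by fun_prop : Continuous fun δ => m + b * (h r - h r₁)
      + δ * ((h r₂ - h r₁) ^ 2 - (h r₂ - h r) ^ 2)).tendsto 0).mono_left nhdsWithin_le_nhds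
  have hle := ge_of_tendsto hlim (eventually_mem_nhdsWithin.mono key)
  rw [zero_mul, add_zero] at hle
  simpa only [hh] using hle

/-- Hadamard's three-circles theorem in log-log scale: if the mean curvature of the
circles satisfies `f_r/f ≤ (1 + log r)/(r log r)` for `r ∈ (r₁, r₂)` (with `1 < r₁ < r₂`)
then for any subharmonic `u` and `r₁ < r < r₂`,
`M_r ≤ (M_{r₁} log(log r₂/log r) + M_{r₂} log(log r/log r₁)) / log(log r₂/log r₁)`. -/
theorem hadamard_three_circles_loglog (f : ℝ → ℝ → ℝ)
    (hf_smooth : ContDiffOn ℝ (⊤ : ℕ∞) (fun p : ℝ × ℝ => f p.1 p.2) {p : ℝ × ℝ | 0 < p.1})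
    (hf_pos : ∀ r θ, 0 < r → 0 < f r θ)
    (hf_per : ∀ r θ, f r (θ + 2 * Real.pi) = f r θ)
    (hf_lim0 : ∀ θ, Tendsto (fun r => f r θ) (nhdsWithin 0 (Set.Ioi 0)) (nhds 0))
    (hf_lim1 : ∀ θ, Tendsto (fun r => deriv (fun s => f s θ) r)
      (nhdsWithin 0 (Set.Ioi 0)) (nhds 1))
    (r₁ r₂ : ℝ) (hr₁ : 1 < r₁) (hr₁₂ : r₁ < r₂)
    (hmean : ∀ r ∈ Set.Ioo r₁ r₂, ∀ θ : ℝ,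
      deriv (fun s => f s θ) r / f r θ ≤ (1 + Real.log r) / (r * Real.log r))
    (u : ℝ × ℝ → ℝ) (hu : ContDiff ℝ 2 u)
    (hsub : ∀ r θ, 0 < r → 0 ≤ polarLaplacian f u r θ) :
    ∀ r : ℝ, r₁ < r → r < r₂ →
      Mmax u r ≤
        (Mmax u r₁ * Real.log (Real.log r₂ / Real.log r) +
          Mmax u r₂ * Real.log (Real.log r / Real.log r₁)) /
            Real.log (Real.log r₂ / Real.log r₁) := by
  intro r hr hr'
  have hF1 : ContDiffOn ℝ 1 (fun p : ℝ × ℝ => f p.1 p.2) {p | 0 < p.1} :=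
    hf_smooth.of_le (by exact_mod_cast le_top)
  have hFd : ∀ s θ, 0 < s → DifferentiableAt ℝ (fun p : ℝ × ℝ => f p.1 p.2) (s, θ) :=
    fun s θ hs => (hF1.differentiableOn one_ne_zero).differentiableAt
      (isOpen_fst_pos.mem_nhds hs)
  have hV := contDiff_comp_polar hu
  have hsubV : ∀ p : ℝ × ℝ, 0 < p.1 → 0 ≤ warpedLaplacian (fun p => f p.1 p.2)
      (fun p => u (p.1 * cos p.2, p.1 * sin p.2)) p := fun p hp => by
    rw [← polarLaplacian_eq_warpedLaplacian (hFd p.1 p.2 hp) hu]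
    exact hsub p.1 p.2 hp
  have h0 : 0 < r₁ := zero_lt_one.trans hr₁
  have hM : Mmax u r₁ ≤ Mmax u r₂ := Mmax_le fun θ =>
    le_of_forall_le_of_subharmonic hF1 (fun p hp => hf_pos p.1 p.2 hp) hf_per hf_lim0 hV
      (periodic_comp_polar u) hsubV h0 hr₁₂ (le_Mmax hu.continuous r₂) θ
  have hl₁ : 0 < log r₁ := log_pos hr₁
  have hl : 0 < log r := log_pos (hr₁.trans hr)
  have hl₂ : 0 < log r₂ := log_pos (hr₁.trans hr₁₂)
  have hlt : log (log r₁) < log (log r₂) := log_lt_log hl₁ (log_lt_log h0 hr₁₂)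
  have hne : log (log r₂) - log (log r₁) ≠ 0 := (sub_pos.mpr hlt).ne'
  rw [log_div hl₂.ne' hl.ne', log_div hl.ne' hl₁.ne', log_div hl₂.ne' hl₁.ne']
  have hmain : Mmax u r ≤ Mmax u r₁ + (Mmax u r₂ - Mmax u r₁) / (log (log r₂) - log (log r₁))
      * (log (log r) - log (log r₁)) := Mmax_le fun θ =>
    le_add_mul_loglog (F := fun p => f p.1 p.2) hV (periodic_comp_polar u) hr₁
      (fun s hs t => hsubV (s, t) (h0.trans hs.1))
      (fun s hs t => by
        rw [← (hFd s t (h0.trans hs.1)).hasDerivAt_radialDeriv.deriv]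
        exact hmean s hs t)
      (div_nonneg (sub_nonneg.mpr hM) (sub_pos.mpr hlt).le) (le_Mmax hu.continuous r₁)
      (fun t => by
        rw [div_mul_cancel₀ _ hne, add_sub_cancel]
        exact le_Mmax hu.continuous r₂ t) ⟨hr.le, hr'.le⟩ θ
  refine hmain.trans_eq ?_
  field_simp
  ring
end

section
/- Suppose there exists r₀ > 1 such that the Gaussian curvature of g satisfies K_g(r,θ) ≥ −1/(r² log r) for all r > r₀ and all θ. Then (ℝ², g) is parabolic: every C² subharmonic function u : ℝ² → ℝ (Δ_g u ≥ 0) that is bounded above is constant. -/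
open Real Filter Set

/-- Composing with `max · 1` preserves a derivative that vanishes where `s ≤ 1`. -/
theorem hasDerivAt_comp_max_one {k : ℝ → ℝ} {k' s : ℝ}
    (hk : HasDerivAt k k' (max s 1)) (h0 : s ≤ 1 → k' = 0) :
    HasDerivAt (fun x => k (max x 1)) k' s := by
  rcases lt_trichotomy s 1 with hs | hs | hs
  · rw [h0 hs.le]
    refine (hasDerivAt_const s (k 1)).congr_of_eventuallyEq ?_
    filter_upwards [Iio_mem_nhds hs] with x hx
    rw [max_eq_right (le_of_lt hx)]
  · subst hs
    have hz := h0 le_rfl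
    subst hz
    rw [max_self] at hk
    have hl : HasDerivWithinAt (fun x => k (max x 1)) 0 (Iic 1) 1 :=
      (hasDerivWithinAt_const (1 : ℝ) (Iic 1) (k 1)).congr_of_mem
        (fun x hx => by rw [max_eq_right hx]) (mem_Iic.2 le_rfl)
    have hr : HasDerivWithinAt (fun x => k (max x 1)) 0 (Ici 1) 1 :=
      hk.hasDerivWithinAt.congr_of_mem
        (fun x hx => by rw [max_eq_left hx]) (mem_Ici.2 le_rfl)
    have h := hl.union hr
    rwa [Iic_union_Ici, hasDerivWithinAt_univ] at h
  · rw [max_eq_left hs.le] at hk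
    refine hk.congr_of_eventuallyEq ?_
    filter_upwards [Ioi_mem_nhds hs] with x hx
    rw [max_eq_left (le_of_lt hx)]

/-- A nondecreasing `C²` function that vanishes for `s ≤ 1` and stays at bounded distance from
the identity on `(0, ∞)`. -/
noncomputable def cutoff (s : ℝ) : ℝ :=
  max s 1 - 8 / 3 + 2 * (max s 1)⁻¹ - (max s 1)⁻¹ ^ 3 / 3

/-- The derivative of `cutoff`. -/
noncomputable def cutoffDeriv (s : ℝ) : ℝ := (1 - (max s 1)⁻¹ ^ 2) ^ 2

/-- The second derivative of `cutoff`. -/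
noncomputable def cutoffDerivTwo (s : ℝ) : ℝ :=
  4 * (max s 1)⁻¹ ^ 3 * (1 - (max s 1)⁻¹ ^ 2)

/-- The primitive of `cutoffDerivTwo s / s` that vanishes for `s ≤ 1`. -/
noncomputable def cutoffAux (s : ℝ) : ℝ :=
  4 * (-((max s 1)⁻¹ ^ 3) / 3 + (max s 1)⁻¹ ^ 5 / 5) + 8 / 15

theorem hasDerivAt_cutoff (s : ℝ) : HasDerivAt cutoff (cutoffDeriv s) s := by
  have hm : max s 1 ≠ 0 := (lt_of_lt_of_le one_pos (le_max_right s 1)).ne'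
  refine hasDerivAt_comp_max_one (k := fun m => m - 8 / 3 + 2 * m⁻¹ - m⁻¹ ^ 3 / 3) ?_ ?_
  · have hi : HasDerivAt (fun m : ℝ => m⁻¹) (-(max s 1)⁻¹ ^ 2) (max s 1) := by
      simpa using hasDerivAt_inv hm
    refine ((((hasDerivAt_id _).sub_const (8 / 3)).add (hi.const_mul 2)).sub
      ((hi.pow 3).div_const 3)).congr_deriv ?_
    simp only [cutoffDeriv]
    push_cast
    ring
  · intro hs
    simp [cutoffDeriv, max_eq_right hs]

theorem hasDerivAt_cutoffDeriv (s : ℝ) : HasDerivAt cutoffDeriv (cutoffDerivTwo s) s := by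
  have hm : max s 1 ≠ 0 := (lt_of_lt_of_le one_pos (le_max_right s 1)).ne'
  refine hasDerivAt_comp_max_one (k := fun m => (1 - m⁻¹ ^ 2) ^ 2) ?_ ?_
  · have hi : HasDerivAt (fun m : ℝ => m⁻¹) (-(max s 1)⁻¹ ^ 2) (max s 1) := by
      simpa using hasDerivAt_inv hm
    refine (((hi.pow 2).const_sub 1).pow 2).congr_deriv ?_
    simp only [cutoffDerivTwo, Pi.pow_apply]
    push_cast
    ring
  · intro hs
    simp [cutoffDerivTwo, max_eq_right hs]

theorem hasDerivAt_cutoffAux (s : ℝ) :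
    HasDerivAt cutoffAux (cutoffDerivTwo s / s) s := by
  have hm : max s 1 ≠ 0 := (lt_of_lt_of_le one_pos (le_max_right s 1)).ne'
  refine hasDerivAt_comp_max_one
    (k := fun m => 4 * (-(m⁻¹ ^ 3) / 3 + m⁻¹ ^ 5 / 5) + 8 / 15) ?_ ?_
  · have hi : HasDerivAt (fun m : ℝ => m⁻¹) (-(max s 1)⁻¹ ^ 2) (max s 1) := by
      simpa using hasDerivAt_inv hm
    have key : cutoffDerivTwo s / s = 4 * ((max s 1)⁻¹ ^ 4 - (max s 1)⁻¹ ^ 6) := by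
      rcases le_total s 1 with hs | hs
      · simp [cutoffDerivTwo, max_eq_right hs]
      · rw [max_eq_left hs] at hm
        simp only [cutoffDerivTwo, max_eq_left hs]
        field_simp
    rw [key]
    refine ((((((hi.pow 3).neg).div_const 3).add ((hi.pow 5).div_const 5)).const_mul 4).add_const
      (8 / 15)).congr_deriv ?_
    push_cast
    ring
  · intro hs
    simp [cutoffDerivTwo, max_eq_right hs]

theorem cutoffDeriv_nonneg (s : ℝ) : 0 ≤ cutoffDeriv s := sq_nonneg _

theorem cutoff_of_le_one {s : ℝ} (hs : s ≤ 1) : cutoff s = 0 := by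
  simp [cutoff, max_eq_right hs]; norm_num

theorem cutoffDeriv_of_le_one {s : ℝ} (hs : s ≤ 1) : cutoffDeriv s = 0 := by
  simp [cutoffDeriv, max_eq_right hs]

theorem cutoffAux_of_le_one {s : ℝ} (hs : s ≤ 1) : cutoffAux s = 0 := by
  simp [cutoffAux, max_eq_right hs]; norm_num

theorem abs_cutoff_sub_le (s : ℝ) : |cutoff s - cutoffDeriv s * s| ≤ 8 := by
  rcases le_total s 1 with hs | hs
  · simp [cutoff_of_le_one hs, cutoffDeriv_of_le_one hs]
  · have hy0 : 0 ≤ s⁻¹ := by positivity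
    have hy1 : s⁻¹ ≤ 1 := inv_le_one_of_one_le₀ hs
    have h3 : s⁻¹ ^ 3 ≤ 1 := pow_le_one₀ hy0 hy1
    have h30 : 0 ≤ s⁻¹ ^ 3 := by positivity
    have hs0 : s ≠ 0 := by positivity
    have key : cutoff s - cutoffDeriv s * s = -(8 / 3) + 4 * s⁻¹ - 4 / 3 * s⁻¹ ^ 3 := by
      simp only [cutoff, cutoffDeriv, max_eq_left hs]
      field_simp
      ring
    rw [key, abs_le]
    constructor <;> linarith

theorem abs_cutoffAux_le (s : ℝ) : |cutoffAux s| ≤ 4 := by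
  have hm : 1 ≤ max s 1 := le_max_right s 1
  have hy0 : 0 ≤ (max s 1)⁻¹ := by positivity
  have hy1 : (max s 1)⁻¹ ≤ 1 := inv_le_one_of_one_le₀ hm
  have h3 : (max s 1)⁻¹ ^ 3 ≤ 1 := pow_le_one₀ hy0 hy1
  have h30 : 0 ≤ (max s 1)⁻¹ ^ 3 := by positivity
  have h5 : (max s 1)⁻¹ ^ 5 ≤ 1 := pow_le_one₀ hy0 hy1
  have h50 : 0 ≤ (max s 1)⁻¹ ^ 5 := by positivity
  rw [cutoffAux, abs_le]
  constructor <;> linarith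

theorem abs_cutoffDeriv_div_sub_le (s : ℝ) : |cutoffDeriv s / s - cutoffAux s| ≤ 5 := by
  rcases le_total s 1 with hs | hs
  · simp [cutoffAux_of_le_one hs, cutoffDeriv_of_le_one hs]
  · have hy0 : 0 ≤ s⁻¹ := by positivity
    have hy1 : s⁻¹ ≤ 1 := inv_le_one_of_one_le₀ hs
    have h2 : s⁻¹ ^ 2 ≤ 1 := pow_le_one₀ hy0 hy1
    have h20 : 0 ≤ s⁻¹ ^ 2 := by positivity
    have hd : cutoffDeriv s ≤ 1 := by
      simp only [cutoffDeriv, max_eq_left hs]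
      exact pow_le_one₀ (by linarith) (by linarith)
    have hds : cutoffDeriv s / s ≤ 1 := (div_le_one (by linarith)).2 (hd.trans hs)
    have hds0 : 0 ≤ cutoffDeriv s / s := div_nonneg (cutoffDeriv_nonneg s) (by linarith)
    have ha := abs_le.1 (abs_cutoffAux_le s)
    rw [abs_le]
    constructor <;> linarith

theorem abs_sub_cutoff_le {s : ℝ} (h0 : 0 < s) : |s - cutoff s| ≤ 8 := by
  rcases le_total s 1 with hs | hs
  · rw [cutoff_of_le_one hs, abs_le]
    constructor <;> linarith
  · have hy0 : 0 ≤ s⁻¹ := by positivity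
    have hy1 : s⁻¹ ≤ 1 := inv_le_one_of_one_le₀ hs
    have h3 : s⁻¹ ^ 3 ≤ 1 := pow_le_one₀ hy0 hy1
    have h30 : 0 ≤ s⁻¹ ^ 3 := by positivity
    simp only [cutoff, max_eq_left hs]
    rw [abs_le]
    constructor <;> linarith

theorem continuous_cutoff : Continuous cutoff :=
  continuous_iff_continuousAt.2 fun s => (hasDerivAt_cutoff s).continuousAt

theorem continuous_cutoffDeriv : Continuous cutoffDeriv :=
  continuous_iff_continuousAt.2 fun s => (hasDerivAt_cutoffDeriv s).continuousAt

theorem continuous_cutoffAux : Continuous cutoffAux :=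
  continuous_iff_continuousAt.2 fun s => (hasDerivAt_cutoffAux s).continuousAt

/-- The lower limit of `m` at `0⁺` is nonnegative. -/
def AsympNonneg (m : ℝ → ℝ) : Prop :=
  ∀ ε > 0, ∀ᶠ r in nhdsWithin 0 (Ioi 0), -ε ≤ m r

theorem AsympNonneg.add {m n : ℝ → ℝ} (hm : AsympNonneg m) (hn : AsympNonneg n) :
    AsympNonneg (fun r => m r + n r) := by
  intro ε hε
  filter_upwards [hm (ε / 2) (half_pos hε), hn (ε / 2) (half_pos hε)] with r h1 h2
  linarith

theorem asympNonneg_of_linear_bound {m : ℝ → ℝ} {ρ C : ℝ} (hρ : 0 < ρ)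
    (h : ∀ r, 0 < r → r < ρ → -(C * r) ≤ m r) : AsympNonneg m := by
  intro ε hε
  have ht : Tendsto (fun r : ℝ => C * r) (nhdsWithin 0 (Ioi 0)) (nhds 0) := by
    have : Tendsto (fun r : ℝ => C * r) (nhds 0) (nhds (C * 0)) :=
      (continuous_const.mul continuous_id).tendsto 0
    rw [mul_zero] at this
    exact this.mono_left nhdsWithin_le_nhds
  filter_upwards [ht.eventually (gt_mem_nhds hε), Ioo_mem_nhdsGT hρ] with r h1 h2
  linarith [h r h2.1 h2.2]

/-- A function on `(0, ρ)` whose derivative is at least `-c` and whose lower limit at `0⁺` is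
nonnegative is bounded below by `-c * r`. -/
theorem AsympNonneg.linear_bound {m m' : ℝ → ℝ} {ρ c : ℝ} (hm : AsympNonneg m)
    (hd : ∀ r, 0 < r → r < ρ → HasDerivAt m (m' r) r)
    (hb : ∀ r, 0 < r → r < ρ → -c ≤ m' r) {r : ℝ} (h0 : 0 < r) (hr : r < ρ) :
    -(c * r) ≤ m r := by
  have hmono : MonotoneOn (fun s => m s + c * s) (Ioo 0 ρ) := by
    refine monotoneOn_of_hasDerivWithinAt_nonneg (convex_Ioo 0 ρ)
      (f' := fun s => m' s + c) ?_ ?_ ?_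
    · intro s hs
      exact ((hd s hs.1 hs.2).add ((hasDerivAt_id s).const_mul c)).continuousAt.continuousWithinAt
    · intro s hs
      rw [interior_Ioo] at hs
      refine (((hd s hs.1 hs.2).add ((hasDerivAt_id s).const_mul c)).congr_deriv
        ?_).hasDerivWithinAt
      ring
    · intro s hs
      rw [interior_Ioo] at hs
      linarith [hb s hs.1 hs.2]
  refine le_of_forall_pos_le_add fun ε hε => ?_
  have ht : Tendsto (fun s : ℝ => c * s) (nhdsWithin 0 (Ioi 0)) (nhds 0) := by
    have : Tendsto (fun s : ℝ => c * s) (nhds 0) (nhds (c * 0)) :=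
      (continuous_const.mul continuous_id).tendsto 0
    rw [mul_zero] at this
    exact this.mono_left nhdsWithin_le_nhds
  obtain ⟨s, h1, h2, h3⟩ := ((hm (ε / 2) (half_pos hε)).and ((ht.eventually
    (lt_mem_nhds (show -(ε / 2) < 0 by linarith))).and (Ioo_mem_nhdsGT h0))).exists
  have := hmono ⟨h3.1, h3.2.trans hr⟩ ⟨h0, hr⟩ h3.2.le
  simp only at this
  linarith

/-- A Baire category argument: let `h r` be continuous functions such that `h r θ = 0` whenever
`f r θ ≤ 1`, where `f r θ → 0` as `r → 0⁺` for every `θ`. Suppose that the integral of `h r` over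
an interval, once its lower limit at `0⁺` is nonnegative, is at least `-C * r` with `C` locally
uniform, and that `C` may be taken proportional to the length of the interval when `f ≤ 1` at its
end points. Then the integral over every interval has nonnegative lower limit at `0⁺`. -/
theorem asympNonneg_integral_of_local_bounds {f h : ℝ → ℝ → ℝ}
    (hf : ∀ r, 0 < r → Continuous (f r)) (hh : ∀ r, 0 < r → Continuous (h r))
    (hlim : ∀ θ, Tendsto (fun r => f r θ) (nhdsWithin 0 (Ioi 0)) (nhds 0))
    (hzero : ∀ r θ, 0 < r → f r θ ≤ 1 → h r θ = 0)
    (hbound : ∀ L : ℝ, ∃ C > 0, ∀ x y, -L ≤ x → x ≤ y → y ≤ L →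
      AsympNonneg (fun r => ∫ θ in x..y, h r θ) →
      (∀ r, 0 < r → r < 1 → -(C * r) ≤ ∫ θ in x..y, h r θ) ∧
      ∀ ρ ≤ 1, (∀ r, 0 < r → r < ρ → f r x ≤ 1 ∧ f r y ≤ 1) →
        ∀ r, 0 < r → r < ρ → -(C * (y - x) * r) ≤ ∫ θ in x..y, h r θ)
    {x y : ℝ} (hxy : x ≤ y) : AsympNonneg (fun r => ∫ θ in x..y, h r θ) := by
  have hint : ∀ r, 0 < r → ∀ a b, IntervalIntegrable (h r) MeasureTheory.volume a b :=
    fun r hr a b => (hh r hr).intervalIntegrable a b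
  have hadd : ∀ {a b c : ℝ}, AsympNonneg (fun r => ∫ θ in a..b, h r θ) →
      AsympNonneg (fun r => ∫ θ in b..c, h r θ) → AsympNonneg (fun r => ∫ θ in a..c, h r θ) := by
    intro a b c h1 h2 ε hε
    filter_upwards [(h1.add h2) ε hε, self_mem_nhdsWithin] with r hr h0
    rwa [intervalIntegral.integral_add_adjacent_intervals (hint r h0 a b) (hint r h0 b c)] at hr
  have hself : ∀ a : ℝ, AsympNonneg (fun r => ∫ θ in a..a, h r θ) := by
    intro a ε hε
    refine Eventually.of_forall fun r => ?_
    simp only [intervalIntegral.integral_same]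
    linarith
  set G : Set ℝ := {t | ∃ δ > 0, ∀ a b, t - δ < a → a ≤ b → b < t + δ →
    AsympNonneg (fun r => ∫ θ in a..b, h r θ)} with hG
  have hGopen : IsOpen G := by
    rw [Metric.isOpen_iff]
    rintro t ⟨δ, hδ, ht⟩
    refine ⟨δ / 2, half_pos hδ, fun s hs => ⟨δ / 2, half_pos hδ, fun a b h1 h2 h3 => ?_⟩⟩
    rw [Metric.mem_ball, Real.dist_eq, abs_lt] at hs
    exact ht a b (by linarith) h2 (by linarith)
  have hcompact : ∀ a b, a ≤ b → Icc a b ⊆ G → AsympNonneg (fun r => ∫ θ in a..b, h r θ) := by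
    intro a b hab hsub
    choose δ hδ hloc using fun t : Icc a b => hsub t.2
    obtain ⟨t, ht0, htm, ⟨N, hN⟩, hti⟩ := exists_monotone_Icc_subset_open_cover_Icc hab
      (c := fun i : Icc a b => {s : Icc a b | (i : ℝ) - δ i < s ∧ (s : ℝ) < i + δ i})
      (fun i => (isOpen_lt continuous_const continuous_subtype_val).inter
        (isOpen_lt continuous_subtype_val continuous_const))
      (fun s _ => mem_iUnion.2 ⟨s, by
        have := hδ s
        simp only [mem_ofPred_eq]
        constructor <;> linarith⟩)
    have hind : ∀ n, AsympNonneg (fun r => ∫ θ in a..(t n : ℝ), h r θ) := by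
      intro n
      induction n with
      | zero => rw [ht0]; exact hself a
      | succ n ih =>
        refine hadd ih ?_
        obtain ⟨i, hi⟩ := hti n
        have hle : t n ≤ t (n + 1) := htm (Nat.le_succ n)
        exact hloc i _ _ (hi (left_mem_Icc.2 hle)).1 hle (hi (right_mem_Icc.2 hle)).2
    have := hind N
    rwa [hN N le_rfl] at this
  have hgap : ∀ a b, a ≤ b → Ioo a b ⊆ G → AsympNonneg (fun r => ∫ θ in a..b, h r θ) := by
    intro a b hab hsub
    rcases hab.eq_or_lt with rfl | hlt
    · exact hself a
    obtain ⟨C, hC, hCb⟩ := hbound (|a| + |b|)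
    have hLa := neg_abs_le a
    have hLb := le_abs_self b
    have ha0 := abs_nonneg a
    have hb0 := abs_nonneg b
    refine asympNonneg_of_linear_bound (C := C) one_pos fun r h0 h1 => ?_
    have hcont : Continuous fun z : ℝ => ∫ θ in a..z, h r θ :=
      intervalIntegral.continuous_primitive (hint r h0) a
    have htend : Tendsto (fun τ : ℝ => (∫ θ in a..(b - τ), h r θ) - ∫ θ in a..(a + τ), h r θ)
        (nhdsWithin 0 (Ioi 0)) (nhds (∫ θ in a..b, h r θ)) := by
      have hc : Continuous fun τ : ℝ =>
          (∫ θ in a..(b - τ), h r θ) - ∫ θ in a..(a + τ), h r θ :=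
        (hcont.comp (continuous_const.sub continuous_id)).sub
          (hcont.comp (continuous_const.add continuous_id))
      have := hc.tendsto 0
      simp only [sub_zero, add_zero, intervalIntegral.integral_same] at this
      exact this.mono_left nhdsWithin_le_nhds
    refine ge_of_tendsto htend ?_
    filter_upwards [Ioo_mem_nhdsGT (show (0 : ℝ) < (b - a) / 2 by linarith)] with τ hτ
    have hτ1 := hτ.1
    have hτ2 := hτ.2
    rw [intervalIntegral.integral_interval_sub_left (hint r h0 _ _) (hint r h0 _ _)]
    refine (hCb (a + τ) (b - τ) (by linarith) (by linarith) (by linarith)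
      (hcompact _ _ (by linarith) fun s hs => hsub ⟨?_, ?_⟩)).1 r h0 h1
    · linarith [hs.1]
    · linarith [hs.2]
  suffices hGuniv : G = univ from hcompact x y hxy (by rw [hGuniv]; exact subset_univ _)
  by_contra hne
  have hBclosed : IsClosed Gᶜ := hGopen.isClosed_compl
  have hBne : (Gᶜ).Nonempty := nonempty_compl.2 hne
  have : Nonempty ↥(Gᶜ) := hBne.to_subtype
  have : CompleteSpace ↥(Gᶜ) := hBclosed.completeSpace_coe
  obtain ⟨k, t, ht⟩ := nonempty_interior_of_iUnion_of_closed
    (f := fun k : ℕ => {s : ↥(Gᶜ) | ∀ r, 0 < r → r < 1 / ((k : ℝ) + 1) → f r s ≤ 1})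
    (fun k => by
      simp only [ofPred_forall]
      exact isClosed_iInter fun r => isClosed_iInter fun h0 => isClosed_iInter fun _ =>
        isClosed_le ((hf r h0).comp continuous_subtype_val) continuous_const)
    (by
      refine eq_univ_of_forall fun s => mem_iUnion.2 ?_
      have hev := (hlim s).eventually (ge_mem_nhds one_pos)
      rw [eventually_nhdsWithin_iff, Metric.eventually_nhds_iff] at hev
      obtain ⟨ε, hε, hb⟩ := hev
      obtain ⟨k, hk⟩ := exists_nat_one_div_lt hε
      refine ⟨k, fun r h0 h1 => hb ?_ h0⟩
      rw [Real.dist_eq, sub_zero, abs_of_pos h0]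
      exact h1.trans hk)
  rw [mem_interior_iff_mem_nhds, Metric.mem_nhds_iff] at ht
  obtain ⟨δ, hδ, hball⟩ := ht
  set ρ : ℝ := 1 / ((k : ℝ) + 1) with hρ
  have hρ0 : 0 < ρ := by positivity
  have hρ1 : ρ ≤ 1 := by
    rw [hρ, div_le_one (by positivity)]
    have : (0 : ℝ) ≤ k := Nat.cast_nonneg k
    linarith
  have hdead : ∀ s ∈ Gᶜ, (t : ℝ) - δ < s → s < t + δ → ∀ r, 0 < r → r < ρ → f r s ≤ 1 := by
    intro s hs h1 h2
    have hs' : (⟨s, hs⟩ : ↥(Gᶜ)) ∈ Metric.ball t δ := by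
      rw [Metric.mem_ball, Subtype.dist_eq, Real.dist_eq, abs_lt]
      constructor <;> linarith
    exact hball hs'
  refine t.2 ⟨δ, hδ, fun a b ha hab hb => ?_⟩
  by_cases hdisj : (Gᶜ ∩ Icc a b).Nonempty
  swap
  · refine hcompact a b hab fun s hs => ?_
    by_contra hsG
    exact hdisj ⟨s, hsG, hs⟩
  have hKcomp : IsCompact (Gᶜ ∩ Icc a b) := isCompact_Icc.inter_left hBclosed
  obtain ⟨a₀, ha₀⟩ := hKcomp.exists_isLeast hdisj
  obtain ⟨b₀, hb₀⟩ := hKcomp.exists_isGreatest hdisj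
  have hab₀ : a₀ ≤ b₀ := ha₀.2 hb₀.1
  have hleft : AsympNonneg (fun r => ∫ θ in a..a₀, h r θ) := by
    refine hgap a a₀ ha₀.1.2.1 fun s hs => ?_
    by_contra hsG
    exact absurd (ha₀.2 ⟨hsG, hs.1.le, hs.2.le.trans ha₀.1.2.2⟩) (not_le.2 hs.2)
  have hright : AsympNonneg (fun r => ∫ θ in b₀..b, h r θ) := by
    refine hgap b₀ b hb₀.1.2.2 fun s hs => ?_
    by_contra hsG
    exact absurd (hb₀.2 ⟨hsG, hb₀.1.2.1.trans hs.1.le, hs.2.le⟩) (not_le.2 hs.1)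
  refine hadd (hadd hleft ?_) hright
  obtain ⟨C, hC, hCb⟩ := hbound (|a| + |b|)
  have hLa := neg_abs_le a
  have hLb := le_abs_self b
  have habs0 := abs_nonneg a
  have hbbs0 := abs_nonneg b
  have ha1 := ha₀.1.2.1
  have hb1 := hb₀.1.2.2
  refine asympNonneg_of_linear_bound (C := C * (b₀ - a₀)) hρ0 fun r h0 hr => ?_
  have hcont : Continuous fun z : ℝ => ∫ θ in a₀..z, h r θ :=
    intervalIntegral.continuous_primitive (hint r h0) a₀
  have hmem : b₀ ∈ Gᶜ ∩ {z | -(C * (z - a₀) * r) ≤ ∫ θ in a₀..z, h r θ} := by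
    refine IsClosed.mem_of_ge_of_forall_exists_gt (a := a₀) ?_ ?_ hab₀ ?_
    · refine (hBclosed.inter (isClosed_le ?_ hcont)).inter isClosed_Icc
      fun_prop
    · refine ⟨ha₀.1.1, ?_⟩
      simp
    · rintro z ⟨⟨hzB, hz⟩, hza, hzb⟩
      simp only [mem_ofPred_eq] at hz
      have hstep : ∀ z' ∈ Gᶜ, z < z' → z' ≤ b₀ →
          -(C * (z' - z) * r) ≤ ∫ θ in z..z', h r θ →
          ((Gᶜ ∩ {z | -(C * (z - a₀) * r) ≤ ∫ θ in a₀..z, h r θ}) ∩ Ioc z b₀).Nonempty := by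
        intro z' hz'B hzz' hz'b hle
        refine ⟨z', ⟨hz'B, ?_⟩, hzz', hz'b⟩
        simp only [mem_ofPred_eq]
        rw [← intervalIntegral.integral_add_adjacent_intervals (hint r h0 a₀ z) (hint r h0 z z')]
        nlinarith
      have hhz : h r z = 0 :=
        hzero r z h0 (hdead z hzB (by linarith) (by linarith) r h0 hr)
      have hnear : ∀ᶠ s in nhds z, -(C * r) < h r s := by
        refine (hh r h0).continuousAt.eventually (lt_mem_nhds ?_)
        rw [hhz]
        nlinarith [mul_pos hC h0]
      rw [Metric.eventually_nhds_iff] at hnear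
      obtain ⟨η, hη, hnear⟩ := hnear
      by_cases hclose : ∃ z' ∈ Gᶜ, z < z' ∧ z' ≤ b₀ ∧ z' < z + η
      · obtain ⟨z', hz'B, h1, h2, h3⟩ := hclose
        refine hstep z' hz'B h1 h2 ?_
        have hmono := intervalIntegral.integral_mono_on h1.le
          (intervalIntegrable_const (c := -(C * r))) (hint r h0 z z') (fun s hs => (hnear (by
            rw [Real.dist_eq, abs_lt]
            constructor <;> linarith [hs.1, hs.2])).le)
        rw [intervalIntegral.integral_const, smul_eq_mul] at hmono
        linarith
      · push Not at hclose
        have hK' : IsCompact (Gᶜ ∩ Icc (z + η) b₀) := isCompact_Icc.inter_left hBclosed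
        have hb₀η : z + η ≤ b₀ := hclose b₀ hb₀.1.1 hzb le_rfl
        obtain ⟨z', hz'⟩ := hK'.exists_isLeast ⟨b₀, hb₀.1.1, hb₀η, le_rfl⟩
        have hzz' : z < z' := by linarith [hz'.1.2.1]
        have hz'b := hz'.1.2.2
        refine hstep z' hz'.1.1 hzz' hz'b ?_
        have hasy : AsympNonneg (fun r => ∫ θ in z..z', h r θ) := by
          refine hgap z z' hzz'.le fun s hs => ?_
          by_contra hsG
          have hsb : s ≤ b₀ := hs.2.le.trans hz'b
          exact absurd (hz'.2 ⟨hsG, hclose s hsG hs.1 hsb, hsb⟩) (not_le.2 hs.2)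
        refine (hCb z z' (by linarith) hzz'.le (by linarith) hasy).2 ρ hρ1
          (fun r' h0' hr' => ⟨?_, ?_⟩) r h0 hr
        · exact hdead z hzB (by linarith) (by linarith) r' h0' hr'
        · exact hdead z' hz'.1.1 (by linarith) (by linarith) r' h0' hr'
  exact hmem.2

theorem continuous_slice_of_pos {F : ℝ → ℝ → ℝ}
    (hF : ContinuousOn (fun p : ℝ × ℝ => F p.1 p.2) {p | 0 < p.1}) {r : ℝ} (hr : 0 < r) :
    Continuous (F r) :=
  hF.comp_continuous (f := fun θ => (r, θ)) (by fun_prop) fun _ => hr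

/-- Differentiation under the integral sign in the radial variable. -/
theorem hasDerivAt_integral_radial {F F' : ℝ → ℝ → ℝ}
    (hF : ContinuousOn (fun p : ℝ × ℝ => F p.1 p.2) {p | 0 < p.1})
    (hF' : ContinuousOn (fun p : ℝ × ℝ => F' p.1 p.2) {p | 0 < p.1})
    (hd : ∀ r θ, 0 < r → HasDerivAt (fun s => F s θ) (F' r θ) r) (a b : ℝ) {r : ℝ} (hr : 0 < r) :
    HasDerivAt (fun s => ∫ θ in a..b, F s θ) (∫ θ in a..b, F' r θ) r := by
  have hK : IsCompact (Icc (r / 2) (2 * r) ×ˢ uIcc a b) := isCompact_Icc.prod isCompact_uIcc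
  obtain ⟨B, hB⟩ := hK.exists_bound_of_continuousOn (hF'.mono fun p hp =>
    lt_of_lt_of_le (half_pos hr) hp.1.1)
  refine (intervalIntegral.hasDerivAt_integral_of_dominated_loc_of_deriv_le (F' := F')
    (bound := fun _ => B) (Icc_mem_nhds (half_lt_self hr) (by linarith : r < 2 * r)) ?_
    ((continuous_slice_of_pos hF hr).intervalIntegrable a b)
    (continuous_slice_of_pos hF' hr).aestronglyMeasurable ?_ intervalIntegrable_const ?_).2
  · filter_upwards [Ioi_mem_nhds hr] with s hs
    exact (continuous_slice_of_pos hF hs).aestronglyMeasurable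
  · refine Eventually.of_forall fun θ hθ s hs => ?_
    exact hB (s, θ) ⟨hs, uIoc_subset_uIcc hθ⟩
  · refine Eventually.of_forall fun θ _ s hs => hd s θ ?_
    exact lt_of_lt_of_le (half_pos hr) hs.1

/-- For the metric `dr² + f² dθ²` on the punctured plane, where `f → 0` at the origin along every
ray, the flux through an arc of radius `r` of a subharmonic function with bounded second
derivatives has nonnegative lower limit as `r → 0⁺`. -/
theorem asympNonneg_flux {f fr ft wr wt wrr wtt : ℝ → ℝ → ℝ}
    (hfc : ContinuousOn (fun p : ℝ × ℝ => f p.1 p.2) {p | 0 < p.1})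
    (hfrc : ContinuousOn (fun p : ℝ × ℝ => fr p.1 p.2) {p | 0 < p.1})
    (hftc : ContinuousOn (fun p : ℝ × ℝ => ft p.1 p.2) {p | 0 < p.1})
    (hfpos : ∀ r θ, 0 < r → 0 < f r θ)
    (hfr : ∀ r θ, 0 < r → HasDerivAt (fun s => f s θ) (fr r θ) r)
    (hft : ∀ r θ, 0 < r → HasDerivAt (fun t => f r t) (ft r θ) θ)
    (hlim : ∀ θ, Tendsto (fun r => f r θ) (nhdsWithin 0 (Ioi 0)) (nhds 0))
    (hwrc : Continuous fun p : ℝ × ℝ => wr p.1 p.2)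
    (hwtc : Continuous fun p : ℝ × ℝ => wt p.1 p.2)
    (hwrrc : Continuous fun p : ℝ × ℝ => wrr p.1 p.2)
    (hwttc : Continuous fun p : ℝ × ℝ => wtt p.1 p.2)
    (hwrr : ∀ r θ, HasDerivAt (fun s => wr s θ) (wrr r θ) r)
    (hwtt : ∀ r θ, HasDerivAt (fun t => wt r t) (wtt r θ) θ)
    (hsub : ∀ r θ, 0 < r → 0 ≤ wrr r θ + fr r θ / f r θ * wr r θ + 1 / f r θ ^ 2 * wtt r θ
      - ft r θ / f r θ ^ 3 * wt r θ)
    {a b : ℝ} (hab : a ≤ b) : AsympNonneg (fun r => ∫ θ in a..b, f r θ * wr r θ) := by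
  set h : ℝ → ℝ → ℝ := fun r θ => cutoff (f r θ) * wr r θ with hh
  set h' : ℝ → ℝ → ℝ := fun r θ =>
    cutoffDeriv (f r θ) * fr r θ * wr r θ + cutoff (f r θ) * wrr r θ with hh'
  set T : ℝ → ℝ → ℝ := fun r θ =>
    (cutoffDeriv (f r θ) / f r θ - cutoffAux (f r θ)) * wt r θ with hT
  set T' : ℝ → ℝ → ℝ := fun r θ =>
    cutoffDeriv (f r θ) * (wtt r θ / f r θ - ft r θ * wt r θ / f r θ ^ 2)
      - cutoffAux (f r θ) * wtt r θ with hT'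
  have hfne : ∀ p ∈ {p : ℝ × ℝ | 0 < p.1}, f p.1 p.2 ≠ 0 := fun p hp => (hfpos _ _ hp).ne'
  have hcc : ContinuousOn (fun p : ℝ × ℝ => cutoff (f p.1 p.2)) {p | 0 < p.1} :=
    continuous_cutoff.comp_continuousOn hfc
  have hdc : ContinuousOn (fun p : ℝ × ℝ => cutoffDeriv (f p.1 p.2)) {p | 0 < p.1} :=
    continuous_cutoffDeriv.comp_continuousOn hfc
  have hac : ContinuousOn (fun p : ℝ × ℝ => cutoffAux (f p.1 p.2)) {p | 0 < p.1} :=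
    continuous_cutoffAux.comp_continuousOn hfc
  have hhc : ContinuousOn (fun p : ℝ × ℝ => h p.1 p.2) {p | 0 < p.1} :=
    hcc.mul hwrc.continuousOn
  have hhc' : ContinuousOn (fun p : ℝ × ℝ => h' p.1 p.2) {p | 0 < p.1} :=
    ((hdc.mul hfrc).mul hwrc.continuousOn).add (hcc.mul hwrrc.continuousOn)
  have hTc' : ContinuousOn (fun p : ℝ × ℝ => T' p.1 p.2) {p | 0 < p.1} :=
    (hdc.mul ((hwttc.continuousOn.div hfc hfne).sub ((hftc.mul hwtc.continuousOn).div
      (hfc.pow 2) fun p hp => pow_ne_zero 2 (hfne p hp)))).sub (hac.mul hwttc.continuousOn)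
  have hhd : ∀ r θ, 0 < r → HasDerivAt (fun s => h s θ) (h' r θ) r := by
    intro r θ hr
    exact (((hasDerivAt_cutoff (f r θ)).comp r (hfr r θ hr)).mul (hwrr r θ))
  have hTd : ∀ r θ, 0 < r → HasDerivAt (fun t => T r t) (T' r θ) θ := by
    intro r θ hr
    have hne : f r θ ≠ 0 := (hfpos r θ hr).ne'
    have h1 := (hasDerivAt_cutoffDeriv (f r θ)).comp θ (hft r θ hr)
    have h2 := (hasDerivAt_cutoffAux (f r θ)).comp θ (hft r θ hr)
    refine (((h1.div (hft r θ hr) hne).sub h2).mul (hwtt r θ)).congr_deriv ?_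
    simp only [hT', Function.comp_apply, Pi.sub_apply, Pi.div_apply]
    field_simp
    ring
  have hpt : ∀ r θ D, 0 < r → |wrr r θ| ≤ D → |wtt r θ| ≤ D → -(12 * D) - T' r θ ≤ h' r θ := by
    intro r θ D hr h1 h2
    have hp := hfpos r θ hr
    have hD : 0 ≤ D := (abs_nonneg _).trans h1
    have key : h' r θ + T' r θ = cutoffDeriv (f r θ) * (f r θ * (wrr r θ
        + fr r θ / f r θ * wr r θ + 1 / f r θ ^ 2 * wtt r θ - ft r θ / f r θ ^ 3 * wt r θ))
        + (cutoff (f r θ) - cutoffDeriv (f r θ) * f r θ) * wrr r θ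
        - cutoffAux (f r θ) * wtt r θ := by
      simp only [hh', hT']
      field_simp
      ring
    have hA := mul_nonneg (cutoffDeriv_nonneg (f r θ)) (mul_nonneg hp.le (hsub r θ hr))
    have hB : |(cutoff (f r θ) - cutoffDeriv (f r θ) * f r θ) * wrr r θ| ≤ 8 * D := by
      rw [abs_mul]
      exact mul_le_mul (abs_cutoff_sub_le _) h1 (abs_nonneg _) (by norm_num)
    have hC : |cutoffAux (f r θ) * wtt r θ| ≤ 4 * D := by
      rw [abs_mul]
      exact mul_le_mul (abs_cutoffAux_le _) h2 (abs_nonneg _) (by norm_num)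
    have hB' := (abs_le.1 hB).1
    have hC' := (abs_le.1 hC).2
    linarith
  have hderiv : ∀ x y r D, x ≤ y → 0 < r →
      (∀ θ ∈ Icc x y, |wrr r θ| ≤ D ∧ |wtt r θ| ≤ D) →
      -(12 * D * (y - x)) - (T r y - T r x) ≤ ∫ θ in x..y, h' r θ := by
    intro x y r D hxy hr hD
    have hTint := (continuous_slice_of_pos hTc' hr).intervalIntegrable
      (μ := MeasureTheory.volume) x y
    have hTI : ∫ θ in x..y, T' r θ = T r y - T r x :=
      intervalIntegral.integral_eq_sub_of_hasDerivAt (fun θ _ => hTd r θ hr) hTint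
    have hmono := intervalIntegral.integral_mono_on hxy
      ((intervalIntegrable_const (c := -(12 * D))).sub hTint)
      ((continuous_slice_of_pos hhc' hr).intervalIntegrable x y)
      (fun θ hθ => hpt r θ D hr (hD θ hθ).1 (hD θ hθ).2)
    rw [intervalIntegral.integral_sub intervalIntegrable_const hTint, hTI,
      intervalIntegral.integral_const, smul_eq_mul] at hmono
    linarith
  have hmain : AsympNonneg (fun r => ∫ θ in a..b, h r θ) := by
    refine asympNonneg_integral_of_local_bounds (f := f)
      (fun r hr => continuous_slice_of_pos hfc hr) (fun r hr => continuous_slice_of_pos hhc hr)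
      hlim (fun r θ _ hle => by simp [hh, cutoff_of_le_one hle]) ?_ hab
    intro L
    have hK : IsCompact (Icc (0 : ℝ) 1 ×ˢ Icc (-L) L) := isCompact_Icc.prod isCompact_Icc
    obtain ⟨D₁, hD₁⟩ := hK.exists_bound_of_continuousOn hwrrc.continuousOn
    obtain ⟨D₂, hD₂⟩ := hK.exists_bound_of_continuousOn hwttc.continuousOn
    obtain ⟨D₃, hD₃⟩ := hK.exists_bound_of_continuousOn hwtc.continuousOn
    set D := |D₁| + |D₂| + |D₃| with hD
    have hD0 : 0 ≤ D := by positivity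
    have hL0 := abs_nonneg L
    have hbd : ∀ r θ, 0 < r → r < 1 → θ ∈ Icc (-L) L →
        |wrr r θ| ≤ D ∧ |wtt r θ| ≤ D ∧ |wt r θ| ≤ D := by
      intro r θ h0 h1 hθ
      have hmem : (r, θ) ∈ Icc (0 : ℝ) 1 ×ˢ Icc (-L) L := ⟨⟨h0.le, h1.le⟩, hθ⟩
      have e1 := hD₁ _ hmem
      have e2 := hD₂ _ hmem
      have e3 := hD₃ _ hmem
      rw [Real.norm_eq_abs] at e1 e2 e3
      have := le_abs_self D₁
      have := le_abs_self D₂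
      have := le_abs_self D₃
      have := abs_nonneg D₁
      have := abs_nonneg D₂
      have := abs_nonneg D₃
      refine ⟨?_, ?_, ?_⟩ <;> simp only at e1 e2 e3 <;> linarith
    refine ⟨24 * D * |L| + 12 * D + 1, by positivity, fun x y hx hxy hy hasy => ⟨?_, ?_⟩⟩
    · intro r h0 h1
      refine hasy.linear_bound (ρ := 1)
        (fun s hs _ => hasDerivAt_integral_radial hhc hhc' hhd x y hs) ?_ h0 h1
      intro s hs0 hs1
      have hd := hderiv x y s D hxy hs0 fun θ hθ =>
        have := hbd s θ hs0 hs1 ⟨hx.trans hθ.1, hθ.2.trans hy⟩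
        ⟨this.1, this.2.1⟩
      have hTb : ∀ θ ∈ Icc (-L) L, |T s θ| ≤ 5 * D := by
        intro θ hθ
        simp only [hT]
        rw [abs_mul]
        exact mul_le_mul (abs_cutoffDeriv_div_sub_le _) (hbd s θ hs0 hs1 hθ).2.2 (abs_nonneg _)
          (by norm_num)
      have t1 := (abs_le.1 (hTb x ⟨hx, hxy.trans hy⟩)).1
      have t2 := (abs_le.1 (hTb y ⟨hx.trans hxy, hy⟩)).2
      have hle : D * (y - x) ≤ D * (2 * |L|) :=
        mul_le_mul_of_nonneg_left (by linarith [le_abs_self L]) hD0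
      linarith
    · intro ρ hρ hdead r h0 hr
      refine hasy.linear_bound (ρ := ρ)
        (fun s hs _ => hasDerivAt_integral_radial hhc hhc' hhd x y hs) ?_ h0 hr
      intro s hs0 hs1
      have hs1' : s < 1 := hs1.trans_le hρ
      have hd := hderiv x y s D hxy hs0 fun θ hθ =>
        have := hbd s θ hs0 hs1' ⟨hx.trans hθ.1, hθ.2.trans hy⟩
        ⟨this.1, this.2.1⟩
      have hTx : T s x = 0 := by
        simp [hT, cutoffDeriv_of_le_one (hdead s hs0 hs1).1,
          cutoffAux_of_le_one (hdead s hs0 hs1).1]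
      have hTy : T s y = 0 := by
        simp [hT, cutoffDeriv_of_le_one (hdead s hs0 hs1).2,
          cutoffAux_of_le_one (hdead s hs0 hs1).2]
      rw [hTx, hTy] at hd
      have : 0 ≤ D * |L| * (y - x) := by
        have := sub_nonneg.2 hxy
        positivity
      nlinarith
  have hdiff : Tendsto (fun r => ∫ θ in a..b, (f r θ - cutoff (f r θ)) * wr r θ)
      (nhdsWithin 0 (Ioi 0)) (nhds (∫ θ in a..b, (0 : ℝ))) := by
    have hK : IsCompact (Icc (0 : ℝ) 1 ×ˢ uIcc a b) := isCompact_Icc.prod isCompact_uIcc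
    obtain ⟨D, hD⟩ := hK.exists_bound_of_continuousOn hwrc.continuousOn
    refine intervalIntegral.tendsto_integral_filter_of_dominated_convergence (fun _ => 8 * D)
      ?_ ?_ intervalIntegrable_const ?_
    · filter_upwards [self_mem_nhdsWithin] with r hr
      exact (continuous_slice_of_pos (F := fun r θ => (f r θ - cutoff (f r θ)) * wr r θ)
        ((hfc.sub hcc).mul hwrc.continuousOn) hr).aestronglyMeasurable
    · filter_upwards [Ioo_mem_nhdsGT one_pos] with r hr
      refine Eventually.of_forall fun θ hθ => ?_
      rw [norm_mul]
      exact mul_le_mul (abs_sub_cutoff_le (hfpos r θ hr.1))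
        (hD (r, θ) ⟨⟨hr.1.le, hr.2.le⟩, uIoc_subset_uIcc hθ⟩) (norm_nonneg _) (by norm_num)
    · refine Eventually.of_forall fun θ _ => ?_
      have hwr0 : Tendsto (fun r => wr r θ) (nhdsWithin 0 (Ioi 0)) (nhds (wr 0 θ)) :=
        ((hwrc.comp (continuous_id.prodMk continuous_const)).tendsto 0).mono_left
          nhdsWithin_le_nhds
      have := ((hlim θ).sub ((continuous_cutoff.tendsto 0).comp (hlim θ))).mul hwr0
      rwa [cutoff_of_le_one zero_le_one, sub_zero, zero_mul] at this
  rw [intervalIntegral.integral_zero] at hdiff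
  intro ε hε
  filter_upwards [hmain (ε / 2) (half_pos hε),
    hdiff.eventually (lt_mem_nhds (show -(ε / 2) < 0 by linarith)), self_mem_nhdsWithin]
    with r h1 h2 h0
  have hsum : ∫ θ in a..b, f r θ * wr r θ = (∫ θ in a..b, h r θ)
      + ∫ θ in a..b, (f r θ - cutoff (f r θ)) * wr r θ := by
    rw [← intervalIntegral.integral_add ((continuous_slice_of_pos hhc h0).intervalIntegrable a b)
      ((continuous_slice_of_pos (F := fun r θ => (f r θ - cutoff (f r θ)) * wr r θ)
        ((hfc.sub hcc).mul hwrc.continuousOn) h0).intervalIntegrable a b)]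
    refine intervalIntegral.integral_congr fun θ _ => ?_
    simp only [hh]
    ring
  rw [hsum]
  linarith

theorem antitoneOn_Ici_of_hasDerivAt_nonpos {g g' : ℝ → ℝ} {a : ℝ}
    (hd : ∀ x, a ≤ x → HasDerivAt g (g' x) x) (hg : ∀ x, a ≤ x → g' x ≤ 0) :
    AntitoneOn g (Ici a) := by
  refine antitoneOn_of_deriv_nonpos (convex_Ici a)
    (fun x hx => (hd x hx).continuousAt.continuousWithinAt)
    (fun x hx => (hd x (interior_subset hx)).differentiableAt.differentiableWithinAt)
    fun x hx => ?_
  rw [(hd x (interior_subset hx)).deriv]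
  exact hg x (interior_subset hx)

theorem hasDerivAt_mul_log {r : ℝ} (hr : 0 < r) :
    HasDerivAt (fun s => s * log s) (log r + 1) r := by
  have hne : r ≠ 0 := hr.ne'
  refine ((hasDerivAt_id r).mul (hasDerivAt_log hne)).congr_deriv ?_
  simp [hne]

/-- Sturm comparison with `r log r`, the solution of `h'' = h / (r² log r)`. -/
theorem le_mul_log_of_deriv_two_le {φ φ' φ'' : ℝ → ℝ} {r₁ K : ℝ} (hr₁ : 1 < r₁) (hK : 0 ≤ K)
    (hφ : ∀ r, r₁ ≤ r → HasDerivAt φ (φ' r) r) (hφ' : ∀ r, r₁ ≤ r → HasDerivAt φ' (φ'' r) r)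
    (hle : ∀ r, r₁ ≤ r → φ'' r ≤ φ r / (r ^ 2 * log r))
    (hK₁ : φ r₁ ≤ K) (hK₂ : φ' r₁ * (r₁ * log r₁) - φ r₁ * (log r₁ + 1) ≤ K) {r : ℝ}
    (hr : r₁ ≤ r) :
    φ r ≤ (K / (r₁ * log r₁) + K / (log r₁ ^ 2 * r₁)) * (r * log r) := by
  have hL : 0 < log r₁ := log_pos hr₁
  have hpos : ∀ s, r₁ ≤ s → 0 < s := fun s hs => by linarith
  have hlog : ∀ s, r₁ ≤ s → 0 < log s := fun s hs => log_pos (by linarith)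
  have hW : AntitoneOn (fun s => φ' s * (s * log s) - φ s * (log s + 1)) (Ici r₁) := by
    refine antitoneOn_Ici_of_hasDerivAt_nonpos
      (g' := fun s => φ'' s * (s * log s) - φ s / s) (fun s hs => ?_) fun s hs => ?_
    · refine (((hφ' s hs).mul (hasDerivAt_mul_log (hpos s hs))).sub
        ((hφ s hs).mul ((hasDerivAt_log (hpos s hs).ne').add_const 1))).congr_deriv ?_
      simp only [div_eq_mul_inv]
      ring
    · have h0 := hpos s hs
      have h1 := hlog s hs
      have := mul_le_mul_of_nonneg_right (hle s hs) (mul_pos h0 h1).le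
      have e : φ s / (s ^ 2 * log s) * (s * log s) = φ s / s := by field_simp
      linarith
  have hG : AntitoneOn (fun s => φ s / (s * log s) + K / (log r₁ ^ 2 * s)) (Ici r₁) := by
    refine antitoneOn_Ici_of_hasDerivAt_nonpos
      (g' := fun s => (φ' s * (s * log s) - φ s * (log s + 1)) / (s * log s) ^ 2
        - K / (log r₁ * s) ^ 2) (fun s hs => ?_) fun s hs => ?_
    · have h0 := hpos s hs
      have h1 := hlog s hs
      have h2 : HasDerivAt (fun s => K / (log r₁ ^ 2 * s)) (-(K / (log r₁ * s) ^ 2)) s := by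
        refine ((hasDerivAt_const s K).div ((hasDerivAt_id s).const_mul (log r₁ ^ 2))
          (by simp only [id]; positivity)).congr_deriv ?_
        simp only [id]
        field_simp
        ring
      exact ((hφ s hs).div (hasDerivAt_mul_log h0) (by positivity)).add h2
    · have h0 := hpos s hs
      have h1 := hlog s hs
      have hWs : φ' s * (s * log s) - φ s * (log s + 1) ≤ K :=
        (hW self_mem_Ici hs hs).trans hK₂
      have hmono : log r₁ ≤ log s := log_le_log (by linarith) hs
      have e1 : (φ' s * (s * log s) - φ s * (log s + 1)) / (s * log s) ^ 2
          ≤ K / (s * log s) ^ 2 := by gcongr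
      have e2 : K / (s * log s) ^ 2 ≤ K / (log r₁ * s) ^ 2 := by
        rw [mul_comm s]
        gcongr
      linarith
  have h0 := hpos r hr
  have h1 := hlog r hr
  have hGr := hG self_mem_Ici hr hr
  have hnn : 0 ≤ K / (log r₁ ^ 2 * r) := by positivity
  have hfirst : φ r₁ / (r₁ * log r₁) ≤ K / (r₁ * log r₁) := by
    have := hpos r₁ le_rfl
    gcongr
  rw [← div_le_iff₀ (mul_pos h0 h1)]
  simp only at hGr
  linarith

/-- The weighted Cauchy–Schwarz inequality for continuous functions on an interval. -/
theorem sq_integral_mul_le_of_continuous {p q : ℝ → ℝ} (hp : Continuous p) (hq : Continuous q)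
    (hp0 : ∀ t, 0 ≤ p t) {a b : ℝ} (hab : a ≤ b) :
    (∫ t in a..b, p t * q t) ^ 2 ≤ (∫ t in a..b, p t) * ∫ t in a..b, p t * q t ^ 2 := by
  have key : ∀ s : ℝ, 0 ≤ (∫ t in a..b, p t * q t ^ 2) * (s * s)
      + (2 * ∫ t in a..b, p t * q t) * s + ∫ t in a..b, p t := by
    intro s
    have hnn : 0 ≤ ∫ t in a..b, p t * (q t * s + 1) ^ 2 :=
      intervalIntegral.integral_nonneg hab fun t _ => mul_nonneg (hp0 t) (sq_nonneg _)
    have e : ∫ t in a..b, p t * (q t * s + 1) ^ 2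
        = ∫ t in a..b, (p t * q t ^ 2 * (s * s) + p t * q t * (2 * s) + p t) :=
      intervalIntegral.integral_congr fun t _ => by ring
    rw [e, intervalIntegral.integral_add
        (Continuous.intervalIntegrable (by fun_prop) a b)
        (Continuous.intervalIntegrable (by fun_prop) a b),
      intervalIntegral.integral_add
        (Continuous.intervalIntegrable (by fun_prop) a b)
        (Continuous.intervalIntegrable (by fun_prop) a b),
      intervalIntegral.integral_mul_const, intervalIntegral.integral_mul_const] at hnn
    linarith
  have := discrim_le_zero key
  rw [discrim] at this
  nlinarith

/-- A nondecreasing function with `J² ≤ C r log r J'` cannot be positive anywhere, because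
`∫ dr / (r log r)` diverges. -/
theorem nonpos_of_sq_le_mul_deriv {J J' : ℝ → ℝ} {r₂ C : ℝ} (hr₂ : 1 < r₂) (hC : 0 < C)
    (hJ : ∀ r, r₂ ≤ r → HasDerivAt J (J' r) r) (hJ' : ∀ r, r₂ ≤ r → 0 ≤ J' r)
    (hle : ∀ r, r₂ ≤ r → J r ^ 2 ≤ C * (r * log r) * J' r) : J r₂ ≤ 0 := by
  by_contra! hpos
  have hJpos : ∀ r, r₂ ≤ r → 0 < J r := by
    have := antitoneOn_Ici_of_hasDerivAt_nonpos (g := fun r => -J r) (g' := fun r => -J' r)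
      (fun r hr => (hJ r hr).neg) fun r hr => neg_nonpos.2 (hJ' r hr)
    intro r hr
    have h := this self_mem_Ici hr hr
    simp only at h
    linarith
  have hG : AntitoneOn (fun r => (J r)⁻¹ + log (log r) / C) (Ici r₂) := by
    refine antitoneOn_Ici_of_hasDerivAt_nonpos
      (g' := fun r => -J' r / J r ^ 2 + r⁻¹ / log r / C) (fun r hr => ?_) fun r hr => ?_
    · have h0 : 0 < r := by linarith
      have h1 : 0 < log r := log_pos (by linarith)
      exact ((hJ r hr).inv (hJpos r hr).ne').add (((hasDerivAt_log h0.ne').log h1.ne').div_const C)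
    · have h0 : 0 < r := by linarith
      have h1 : 0 < log r := log_pos (by linarith)
      have h2 := hJpos r hr
      have e : r⁻¹ / log r / C = 1 / (C * (r * log r)) := by field_simp
      rw [e, neg_div]
      have : 1 / (C * (r * log r)) ≤ J' r / J r ^ 2 := by
        rw [div_le_div_iff₀ (by positivity) (by positivity)]
        linarith [hle r hr]
      linarith
  have htend : Tendsto (fun r => log (log r)) atTop atTop :=
    tendsto_log_atTop.comp tendsto_log_atTop
  obtain ⟨r, hr1, hr⟩ := ((htend.eventually_gt_atTop
    (C * ((J r₂)⁻¹ + log (log r₂) / C))).and (eventually_ge_atTop r₂)).exists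
  have h := hG self_mem_Ici hr hr
  have hinv := inv_pos.2 (hJpos r hr)
  simp only at h
  have : log (log r) / C < (J r₂)⁻¹ + log (log r₂) / C := by linarith
  rw [div_lt_iff₀ hC] at this
  linarith

theorem ContDiffOn.fderiv_apply_const_of_isOpen {F : ℝ × ℝ → ℝ} {U : Set (ℝ × ℝ)}
    {m n : WithTop ℕ∞} (hF : ContDiffOn ℝ n F U) (hU : IsOpen U) (hmn : m + 1 ≤ n) (v : ℝ × ℝ) :
    ContDiffOn ℝ m (fun p => fderiv ℝ F p v) U :=
  (hF.fderiv_of_isOpen hU hmn).clm_apply contDiffOn_const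

theorem DifferentiableAt.hasDerivAt_slice_fst {F : ℝ × ℝ → ℝ} {r θ : ℝ}
    (hF : DifferentiableAt ℝ F (r, θ)) :
    HasDerivAt (fun s => F (s, θ)) (fderiv ℝ F (r, θ) (1, 0)) r :=
  hF.hasFDerivAt.comp_hasDerivAt r ((hasDerivAt_id r).prodMk (hasDerivAt_const r θ))

theorem DifferentiableAt.hasDerivAt_slice_snd {F : ℝ × ℝ → ℝ} {r θ : ℝ}
    (hF : DifferentiableAt ℝ F (r, θ)) :
    HasDerivAt (fun t => F (r, t)) (fderiv ℝ F (r, θ) (0, 1)) θ :=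
  hF.hasFDerivAt.comp_hasDerivAt θ ((hasDerivAt_const θ r).prodMk (hasDerivAt_id θ))

/-- If `f` grows at most like `r log r`, a subharmonic function bounded above for the metric
`dr² + f² dθ²` has vanishing radial derivative. The proof compares the flux
`J(r) = ∫ f e^V V_r dθ` with its derivative. -/
theorem radial_deriv_eq_zero_of_subharmonic {f fr ft V Vr Vt Vrr Vtt : ℝ → ℝ → ℝ}
    (hfc : ContinuousOn (fun p : ℝ × ℝ => f p.1 p.2) {p | 0 < p.1})
    (hfrc : ContinuousOn (fun p : ℝ × ℝ => fr p.1 p.2) {p | 0 < p.1})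
    (hftc : ContinuousOn (fun p : ℝ × ℝ => ft p.1 p.2) {p | 0 < p.1})
    (hfpos : ∀ r θ, 0 < r → 0 < f r θ)
    (hfr : ∀ r θ, 0 < r → HasDerivAt (fun s => f s θ) (fr r θ) r)
    (hft : ∀ r θ, 0 < r → HasDerivAt (fun t => f r t) (ft r θ) θ)
    (hlim : ∀ θ, Tendsto (fun r => f r θ) (nhdsWithin 0 (Ioi 0)) (nhds 0))
    (hfper : ∀ r, f r (2 * π) = f r 0)
    (hVc : Continuous fun p : ℝ × ℝ => V p.1 p.2)
    (hVrc : Continuous fun p : ℝ × ℝ => Vr p.1 p.2)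
    (hVtc : Continuous fun p : ℝ × ℝ => Vt p.1 p.2)
    (hVrrc : Continuous fun p : ℝ × ℝ => Vrr p.1 p.2)
    (hVttc : Continuous fun p : ℝ × ℝ => Vtt p.1 p.2)
    (hVr : ∀ r θ, HasDerivAt (fun s => V s θ) (Vr r θ) r)
    (hVt : ∀ r θ, HasDerivAt (fun t => V r t) (Vt r θ) θ)
    (hVrr : ∀ r θ, HasDerivAt (fun s => Vr s θ) (Vrr r θ) r)
    (hVtt : ∀ r θ, HasDerivAt (fun t => Vt r t) (Vtt r θ) θ)
    (hVper : ∀ r, V r (2 * π) = V r 0) (hVtper : ∀ r, Vt r (2 * π) = Vt r 0)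
    (hsub : ∀ r θ, 0 < r → 0 ≤ Vrr r θ + fr r θ / f r θ * Vr r θ + 1 / f r θ ^ 2 * Vtt r θ
      - ft r θ / f r θ ^ 3 * Vt r θ)
    {M : ℝ} (hM : ∀ r θ, V r θ ≤ M) {r₁ C : ℝ} (hr₁ : 1 < r₁) (hC : 0 < C)
    (hgrowth : ∀ r θ, r₁ ≤ r → θ ∈ Icc 0 (2 * π) → f r θ ≤ C * (r * log r))
    {r θ : ℝ} (hr : 0 < r) (hθ : θ ∈ Icc 0 (2 * π)) : Vr r θ = 0 := by
  have hpi : (0 : ℝ) < 2 * π := two_pi_pos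
  have hfne : ∀ p ∈ {p : ℝ × ℝ | 0 < p.1}, f p.1 p.2 ≠ 0 := fun p hp => (hfpos _ _ hp).ne'
  set wr : ℝ → ℝ → ℝ := fun r θ => exp (V r θ) * Vr r θ with hwr
  set wt : ℝ → ℝ → ℝ := fun r θ => exp (V r θ) * Vt r θ with hwt
  set wrr : ℝ → ℝ → ℝ := fun r θ =>
    exp (V r θ) * Vr r θ * Vr r θ + exp (V r θ) * Vrr r θ with hwrr
  set wtt : ℝ → ℝ → ℝ := fun r θ =>
    exp (V r θ) * Vt r θ * Vt r θ + exp (V r θ) * Vtt r θ with hwtt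
  have hec : Continuous fun p : ℝ × ℝ => exp (V p.1 p.2) := continuous_exp.comp hVc
  have hwrc : Continuous fun p : ℝ × ℝ => wr p.1 p.2 := hec.mul hVrc
  have hwtc : Continuous fun p : ℝ × ℝ => wt p.1 p.2 := hec.mul hVtc
  have hwrrc : Continuous fun p : ℝ × ℝ => wrr p.1 p.2 :=
    ((hec.mul hVrc).mul hVrc).add (hec.mul hVrrc)
  have hwttc : Continuous fun p : ℝ × ℝ => wtt p.1 p.2 :=
    ((hec.mul hVtc).mul hVtc).add (hec.mul hVttc)
  have hwrr' : ∀ r θ, HasDerivAt (fun s => wr s θ) (wrr r θ) r := fun r θ =>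
    (hVr r θ).exp.mul (hVrr r θ)
  have hwtt' : ∀ r θ, HasDerivAt (fun t => wt r t) (wtt r θ) θ := fun r θ =>
    (hVt r θ).exp.mul (hVtt r θ)
  have hsubw : ∀ r θ, 0 < r → exp (V r θ) * Vr r θ ^ 2 ≤ wrr r θ + fr r θ / f r θ * wr r θ
      + 1 / f r θ ^ 2 * wtt r θ - ft r θ / f r θ ^ 3 * wt r θ := by
    intro r θ hr
    have h1 := mul_nonneg (exp_pos (V r θ)).le (hsub r θ hr)
    have h2 : 0 ≤ exp (V r θ) * Vt r θ ^ 2 * (1 / f r θ ^ 2) := by positivity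
    have h3 : wrr r θ + fr r θ / f r θ * wr r θ
        + 1 / f r θ ^ 2 * wtt r θ - ft r θ / f r θ ^ 3 * wt r θ
        = exp (V r θ) * (Vrr r θ + fr r θ / f r θ * Vr r θ + 1 / f r θ ^ 2 * Vtt r θ
          - ft r θ / f r θ ^ 3 * Vt r θ) + exp (V r θ) * Vt r θ ^ 2 * (1 / f r θ ^ 2)
          + exp (V r θ) * Vr r θ ^ 2 := by
      simp only [hwrr, hwr, hwtt, hwt]
      ring
    linarith
  set J : ℝ → ℝ := fun r => ∫ θ in (0)..(2 * π), f r θ * wr r θ with hJ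
  set J' : ℝ → ℝ := fun r => ∫ θ in (0)..(2 * π), (fr r θ * wr r θ + f r θ * wrr r θ) with hJ'
  have hIc : ContinuousOn (fun p : ℝ × ℝ => fr p.1 p.2 * wr p.1 p.2 + f p.1 p.2 * wrr p.1 p.2)
      {p | 0 < p.1} := (hfrc.mul hwrc.continuousOn).add (hfc.mul hwrrc.continuousOn)
  have hJd : ∀ r, 0 < r → HasDerivAt J (J' r) r := fun r hr =>
    hasDerivAt_integral_radial (F := fun r θ => f r θ * wr r θ)
      (F' := fun r θ => fr r θ * wr r θ + f r θ * wrr r θ)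
      (hfc.mul hwrc.continuousOn) hIc (fun s t hs => (hfr s t hs).mul (hwrr' s t)) _ _ hr
  have hPc : ∀ r, 0 < r → Continuous fun θ => f r θ * exp (V r θ) := fun r hr =>
    continuous_slice_of_pos (F := fun r θ => f r θ * exp (V r θ))
      (hfc.mul hec.continuousOn) hr
  have hVrs : ∀ r, Continuous fun θ => Vr r θ := fun r =>
    hVrc.comp (continuous_const.prodMk continuous_id)
  have hJ'ge : ∀ r, 0 < r →
      ∫ θ in (0)..(2 * π), f r θ * exp (V r θ) * Vr r θ ^ 2 ≤ J' r := by
    intro r hr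
    set T' : ℝ → ℝ → ℝ := fun r θ =>
      (wtt r θ * f r θ - wt r θ * ft r θ) / f r θ ^ 2 with hT'
    have hT'c : Continuous (T' r) := continuous_slice_of_pos
      (((hwttc.continuousOn.mul hfc).sub (hwtc.continuousOn.mul hftc)).div (hfc.pow 2)
        fun p hp => pow_ne_zero 2 (hfne p hp)) hr
    have hT : ∫ θ in (0)..(2 * π), T' r θ = 0 := by
      rw [intervalIntegral.integral_eq_sub_of_hasDerivAt (f := fun θ => wt r θ / f r θ)
        (fun θ _ => (hwtt' r θ).div (hft r θ hr) (hfpos r θ hr).ne')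
        (hT'c.intervalIntegrable _ _)]
      simp only [hwt, hfper, hVper, hVtper, sub_self]
    have hIr : Continuous fun θ => fr r θ * wr r θ + f r θ * wrr r θ :=
      continuous_slice_of_pos (F := fun r θ => fr r θ * wr r θ + f r θ * wrr r θ) hIc hr
    have hsum : J' r = ∫ θ in (0)..(2 * π), ((fr r θ * wr r θ + f r θ * wrr r θ) + T' r θ) := by
      rw [intervalIntegral.integral_add (hIr.intervalIntegrable _ _)
        (hT'c.intervalIntegrable _ _), hT, add_zero]
    rw [hsum]
    refine intervalIntegral.integral_mono_on hpi.le
      (((hPc r hr).mul ((hVrs r).pow 2)).intervalIntegrable _ _)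
      ((hIr.add hT'c).intervalIntegrable _ _) fun θ _ => ?_
    have hp := hfpos r θ hr
    have h1 := mul_le_mul_of_nonneg_left (hsubw r θ hr) hp.le
    have h2 : f r θ * (wrr r θ + fr r θ / f r θ * wr r θ
        + 1 / f r θ ^ 2 * wtt r θ - ft r θ / f r θ ^ 3 * wt r θ)
        = (fr r θ * wr r θ + f r θ * wrr r θ) + T' r θ := by
      simp only [hT']
      field_simp
      ring
    rw [← h2, mul_assoc]
    exact h1
  have hQnn : ∀ r, 0 < r → 0 ≤ ∫ θ in (0)..(2 * π), f r θ * exp (V r θ) * Vr r θ ^ 2 :=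
    fun r hr => intervalIntegral.integral_nonneg hpi.le fun θ _ =>
      mul_nonneg (mul_pos (hfpos r θ hr) (exp_pos _)).le (sq_nonneg _)
  have hJ'nn : ∀ r, 0 < r → 0 ≤ J' r := fun r hr => (hQnn r hr).trans (hJ'ge r hr)
  have hJasymp : AsympNonneg J := asympNonneg_flux hfc hfrc hftc hfpos hfr hft hlim hwrc hwtc
    hwrrc hwttc hwrr' hwtt' (fun r θ hr => le_trans (by positivity) (hsubw r θ hr)) hpi.le
  have hJnn : ∀ r, 0 < r → 0 ≤ J r := by
    intro r hr
    have := hJasymp.linear_bound (ρ := r + 1) (c := 0) (m' := J') (fun s hs _ => hJd s hs)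
      (fun s hs _ => by simpa using hJ'nn s hs) hr (by linarith)
    simpa using this
  have hCS : ∀ r, r₁ ≤ r → J r ^ 2 ≤ (2 * π * C * exp M) * (r * log r) * J' r := by
    intro r hr
    have h0 : 0 < r := by linarith
    have hcs := sq_integral_mul_le_of_continuous (hPc r h0) (hVrs r)
      (fun θ => (mul_pos (hfpos r θ h0) (exp_pos _)).le) hpi.le
    have hJe : J r = ∫ θ in (0)..(2 * π), f r θ * exp (V r θ) * Vr r θ :=
      intervalIntegral.integral_congr fun θ _ => by simp only [hwr]; ring
    have hPle : ∫ θ in (0)..(2 * π), f r θ * exp (V r θ)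
        ≤ (2 * π * C * exp M) * (r * log r) := by
      have := intervalIntegral.integral_mono_on (μ := MeasureTheory.volume) hpi.le
        ((hPc r h0).intervalIntegrable _ _)
        (intervalIntegrable_const (c := C * (r * log r) * exp M)) fun θ hθ =>
          mul_le_mul (hgrowth r θ hr hθ) (exp_le_exp.2 (hM r θ)) (exp_pos _).le
            ((hfpos r θ h0).le.trans (hgrowth r θ hr hθ))
      rw [intervalIntegral.integral_const, smul_eq_mul] at this
      linarith
    rw [hJe]
    refine hcs.trans ?_
    have hlog := log_pos (hr₁.trans_le hr)
    exact mul_le_mul hPle (hJ'ge r h0) (hQnn r h0) (by positivity)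
  have hJzero : ∀ r, 0 < r → J r = 0 := by
    intro r hr
    refine le_antisymm ?_ (hJnn r hr)
    have hmono : MonotoneOn J (Ioi 0) := by
      refine monotoneOn_of_deriv_nonneg (convex_Ioi 0)
        (fun x hx => (hJd x hx).continuousAt.continuousWithinAt)
        (fun x hx => (hJd x (interior_subset hx)).differentiableAt.differentiableWithinAt)
        fun x hx => ?_
      rw [(hJd x (interior_subset hx)).deriv]
      exact hJ'nn x (interior_subset hx)
    have hmax : r₁ ≤ max r r₁ := le_max_right _ _
    have hle : J (max r r₁) ≤ 0 := by
      refine nonpos_of_sq_le_mul_deriv (J' := J') (C := 2 * π * C * exp M)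
        (hr₁.trans_le hmax) (by positivity) (fun s hs => hJd s (by linarith))
        (fun s hs => hJ'nn s (by linarith)) fun s hs => hCS s (hmax.trans hs)
    exact (hmono hr (mem_Ioi.2 (by linarith)) (le_max_left _ _)).trans hle
  have hJ'zero : J' r = 0 := by
    have hc : J =ᶠ[nhds r] fun _ => 0 := by
      filter_upwards [Ioi_mem_nhds hr] with s hs using hJzero s hs
    exact (hJd r hr).unique ((hasDerivAt_const r (0 : ℝ)).congr_of_eventuallyEq hc)
  by_contra hne
  have hpos : 0 < ∫ θ in (0)..(2 * π), f r θ * exp (V r θ) * Vr r θ ^ 2 :=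
    intervalIntegral.integral_pos hpi ((hPc r hr).mul ((hVrs r).pow 2)).continuousOn
      (fun t _ => mul_nonneg (mul_pos (hfpos r t hr) (exp_pos _)).le (sq_nonneg _))
      ⟨θ, hθ, mul_pos (mul_pos (hfpos r θ hr) (exp_pos _)) (by positivity)⟩
  linarith [hJ'ge r hr]

/-- The Ahlfors–Milnor–Greene–Wu parabolicity criterion: if the Gaussian curvature of
`g = dr² + f(r,θ)² dθ²` satisfies `K_g(r,θ) ≥ −1/(r² log r)` for all `r > r₀ > 1`, then
`(ℝ², g)` is parabolic: every subharmonic function bounded above is constant. -/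
theorem ahlfors_milnor_greene_wu_parabolicity (f : ℝ → ℝ → ℝ)
    (hf_smooth : ContDiffOn ℝ (⊤ : ℕ∞) (fun p : ℝ × ℝ => f p.1 p.2) {p : ℝ × ℝ | 0 < p.1})
    (hf_pos : ∀ r θ, 0 < r → 0 < f r θ)
    (hf_per : ∀ r θ, f r (θ + 2 * Real.pi) = f r θ)
    (hf_lim0 : ∀ θ, Tendsto (fun r => f r θ) (nhdsWithin 0 (Set.Ioi 0)) (nhds 0))
    (hf_lim1 : ∀ θ, Tendsto (fun r => deriv (fun s => f s θ) r)
      (nhdsWithin 0 (Set.Ioi 0)) (nhds 1))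
    (r₀ : ℝ) (hr₀ : 1 < r₀)
    (hcurv : ∀ r θ, r₀ < r →
      -(deriv (deriv (fun s => f s θ)) r / f r θ) ≥ -(1 / (r ^ 2 * Real.log r)))
    (u : ℝ × ℝ → ℝ) (hu : ContDiff ℝ 2 u)
    (hsub : ∀ r θ, 0 < r → 0 ≤ polarLaplacian f u r θ)
    (hbdd : ∃ C : ℝ, ∀ p : ℝ × ℝ, u p ≤ C) :
    ∃ c : ℝ, ∀ p : ℝ × ℝ, u p = c := by
  have hU : IsOpen {p : ℝ × ℝ | 0 < p.1} := isOpen_lt continuous_const continuous_fst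
  set F : ℝ × ℝ → ℝ := fun p => f p.1 p.2 with hF
  set Fr : ℝ × ℝ → ℝ := fun p => fderiv ℝ F p (1, 0) with hFr
  set Ft : ℝ × ℝ → ℝ := fun p => fderiv ℝ F p (0, 1) with hFt
  set Frr : ℝ × ℝ → ℝ := fun p => fderiv ℝ Fr p (1, 0) with hFrr
  have hF2 : ContDiffOn ℝ 2 F {p : ℝ × ℝ | 0 < p.1} := hf_smooth.of_le
    (WithTop.coe_le_coe.2 (le_top : (2 : ℕ∞) ≤ ⊤))
  have hFr1 : ContDiffOn ℝ 1 Fr {p : ℝ × ℝ | 0 < p.1} :=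
    hF2.fderiv_apply_const_of_isOpen hU (by norm_num) _
  have hFt1 : ContDiffOn ℝ 1 Ft {p : ℝ × ℝ | 0 < p.1} :=
    hF2.fderiv_apply_const_of_isOpen hU (by norm_num) _
  have hFd : ∀ r θ, 0 < r → DifferentiableAt ℝ F (r, θ) := fun r θ hr =>
    (hF2.differentiableOn two_ne_zero).differentiableAt (hU.mem_nhds hr)
  have hFrd : ∀ r θ, 0 < r → DifferentiableAt ℝ Fr (r, θ) := fun r θ hr =>
    (hFr1.differentiableOn one_ne_zero).differentiableAt (hU.mem_nhds hr)
  have hfr : ∀ r θ, 0 < r → HasDerivAt (fun s => f s θ) (Fr (r, θ)) r := fun r θ hr =>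
    (hFd r θ hr).hasDerivAt_slice_fst
  have hft : ∀ r θ, 0 < r → HasDerivAt (fun t => f r t) (Ft (r, θ)) θ := fun r θ hr =>
    (hFd r θ hr).hasDerivAt_slice_snd
  have hfrr : ∀ r θ, 0 < r → HasDerivAt (fun s => Fr (s, θ)) (Frr (r, θ)) r := fun r θ hr =>
    (hFrd r θ hr).hasDerivAt_slice_fst
  have hderiv2 : ∀ r θ, 0 < r → deriv (deriv (fun s => f s θ)) r = Frr (r, θ) := by
    intro r θ hr
    have : deriv (fun s => f s θ) =ᶠ[nhds r] fun s => Fr (s, θ) := by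
      filter_upwards [Ioi_mem_nhds hr] with s hs using (hfr s θ hs).deriv
    rw [this.deriv_eq, (hfrr r θ hr).deriv]
  obtain ⟨C, hC, hgrowth⟩ : ∃ C, 0 < C ∧ ∀ r θ, r₀ + 1 ≤ r → θ ∈ Icc 0 (2 * π) →
      f r θ ≤ C * (r * log r) := by
    have hr₁ : 1 < r₀ + 1 := by linarith
    have hr₁' : 0 < r₀ + 1 := by linarith
    have hc1 : Continuous fun θ => f (r₀ + 1) θ :=
      continuous_slice_of_pos (F := f) hF2.continuousOn hr₁'
    have hc2 : Continuous fun θ => Fr (r₀ + 1, θ) :=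
      continuous_slice_of_pos (F := fun r θ => Fr (r, θ)) hFr1.continuousOn hr₁'
    obtain ⟨K₁, hK₁⟩ := (isCompact_Icc (a := (0 : ℝ)) (b := 2 * π)).exists_bound_of_continuousOn
      hc1.continuousOn
    obtain ⟨K₂, hK₂⟩ := (isCompact_Icc (a := (0 : ℝ)) (b := 2 * π)).exists_bound_of_continuousOn
      ((hc2.mul_const ((r₀ + 1) * log (r₀ + 1))).sub
        (hc1.mul_const (log (r₀ + 1) + 1))).continuousOn
    set K := |K₁| + |K₂| + 1 with hK
    have hKpos : 0 < K := by positivity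
    have hlog := log_pos hr₁
    refine ⟨K / ((r₀ + 1) * log (r₀ + 1)) + K / (log (r₀ + 1) ^ 2 * (r₀ + 1)), by positivity,
      fun r θ hr hθ => ?_⟩
    have hb1 := (le_abs_self _).trans (hK₁ θ hθ)
    have hb2 := (le_abs_self _).trans (hK₂ θ hθ)
    have := le_abs_self K₁
    have := le_abs_self K₂
    have := abs_nonneg K₁
    have := abs_nonneg K₂
    refine le_mul_log_of_deriv_two_le (φ := fun s => f s θ) (φ' := fun s => Fr (s, θ))
      (φ'' := fun s => Frr (s, θ)) hr₁ hKpos.le (fun s hs => hfr s θ (by linarith))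
      (fun s hs => hfrr s θ (by linarith)) (fun s hs => ?_) (by linarith) ?_ hr
    · have hp := hf_pos s θ (by linarith)
      have h := hcurv s θ (by linarith)
      rw [hderiv2 s θ (by linarith)] at h
      have h' : Frr (s, θ) / f s θ ≤ 1 / (s ^ 2 * log s) := by linarith
      rw [div_le_iff₀ hp] at h'
      rwa [one_div_mul_eq_div] at h'
    · exact hb2.trans (by linarith)
  set V : ℝ × ℝ → ℝ := fun p => u (p.1 * cos p.2, p.1 * sin p.2) with hV
  set Vr : ℝ × ℝ → ℝ := fun p => fderiv ℝ V p (1, 0) with hVr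
  set Vt : ℝ × ℝ → ℝ := fun p => fderiv ℝ V p (0, 1) with hVt
  have hV2 : ContDiff ℝ 2 V := hu.comp ((contDiff_fst.mul (contDiff_cos.comp contDiff_snd)).prodMk
    (contDiff_fst.mul (contDiff_sin.comp contDiff_snd)))
  have hVr1 : ContDiff ℝ 1 Vr := (hV2.fderiv_right (by norm_num)).clm_apply contDiff_const
  have hVt1 : ContDiff ℝ 1 Vt := (hV2.fderiv_right (by norm_num)).clm_apply contDiff_const
  have hVrd : ∀ r θ, HasDerivAt (fun s => V (s, θ)) (Vr (r, θ)) r := fun r θ =>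
    (hV2.differentiable two_ne_zero _).hasDerivAt_slice_fst
  have hVtd : ∀ r θ, HasDerivAt (fun t => V (r, t)) (Vt (r, θ)) θ := fun r θ =>
    (hV2.differentiable two_ne_zero _).hasDerivAt_slice_snd
  have hVrrd : ∀ r θ, HasDerivAt (fun s => Vr (s, θ)) (fderiv ℝ Vr (r, θ) (1, 0)) r :=
    fun r θ => (hVr1.differentiable one_ne_zero _).hasDerivAt_slice_fst
  have hVttd : ∀ r θ, HasDerivAt (fun t => Vt (r, t)) (fderiv ℝ Vt (r, θ) (0, 1)) θ :=
    fun r θ => (hVt1.differentiable one_ne_zero _).hasDerivAt_slice_snd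
  have hVper : ∀ r t, V (r, t + 2 * π) = V (r, t) := fun r t => by simp [hV]
  have hVtper : ∀ r, Vt (r, 2 * π) = Vt (r, 0) := by
    intro r
    have h1 := (hVtd r (0 + 2 * π)).comp_add_const 0 (2 * π)
    simp only [hVper] at h1
    rw [zero_add] at h1
    exact h1.unique (hVtd r 0)
  have hsub' : ∀ r θ, 0 < r → 0 ≤ fderiv ℝ Vr (r, θ) (1, 0) + Fr (r, θ) / f r θ * Vr (r, θ)
      + 1 / f r θ ^ 2 * fderiv ℝ Vt (r, θ) (0, 1) - Ft (r, θ) / f r θ ^ 3 * Vt (r, θ) := by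
    intro r θ hr
    have e1 : deriv (fun s => u (s * cos θ, s * sin θ)) = fun s => Vr (s, θ) :=
      funext fun s => (hVrd s θ).deriv
    have e2 : deriv (fun t => u (r * cos t, r * sin t)) = fun t => Vt (r, t) :=
      funext fun t => (hVtd r t).deriv
    have h := hsub r θ hr
    rwa [polarLaplacian, e1, e2, (hVrrd r θ).deriv, (hVttd r θ).deriv, (hfr r θ hr).deriv,
      (hft r θ hr).deriv] at h
  obtain ⟨M, hM⟩ := hbdd
  have hzero : ∀ r θ, 0 < r → θ ∈ Icc 0 (2 * π) → Vr (r, θ) = 0 := fun r θ hr hθ =>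
    radial_deriv_eq_zero_of_subharmonic (f := f) (fr := fun r θ => Fr (r, θ))
      (ft := fun r θ => Ft (r, θ)) (V := fun r θ => V (r, θ)) (Vr := fun r θ => Vr (r, θ))
      (Vt := fun r θ => Vt (r, θ)) (Vrr := fun r θ => fderiv ℝ Vr (r, θ) (1, 0))
      (Vtt := fun r θ => fderiv ℝ Vt (r, θ) (0, 1))
      hF2.continuousOn hFr1.continuousOn hFt1.continuousOn hf_pos hfr hft hf_lim0
      (fun r => by simpa using hf_per r 0) hV2.continuous hVr1.continuous hVt1.continuous
      ((hVr1.continuous_fderiv one_ne_zero).clm_apply continuous_const)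
      ((hVt1.continuous_fderiv one_ne_zero).clm_apply continuous_const)
      hVrd hVtd hVrrd hVttd (fun r => by simpa using hVper r 0) hVtper hsub'
      (fun r θ => hM _) (by linarith : 1 < r₀ + 1) hC hgrowth hr hθ
  have hray : ∀ r θ, 0 ≤ r → θ ∈ Icc 0 (2 * π) → V (r, θ) = u (0, 0) := by
    intro r θ hr hθ
    have hconst := constant_of_has_deriv_right_zero (f := fun s => V (s, θ)) (a := 0) (b := r)
      (fun s _ => (hVrd s θ).continuousAt.continuousWithinAt) (fun s hs => by
        have h := hVrd s θ
        have hs0 : Vr (s, θ) = 0 := by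
          rcases hs.1.eq_or_lt with rfl | hpos
          · have hlim : Tendsto (fun s => Vr (s, θ)) (nhdsWithin 0 (Ioi 0)) (nhds (Vr (0, θ))) :=
              (hVrrd 0 θ).continuousAt.tendsto.mono_left nhdsWithin_le_nhds
            refine tendsto_nhds_unique hlim (tendsto_const_nhds.congr' ?_)
            filter_upwards [self_mem_nhdsWithin] with s hs using (hzero s θ hs hθ).symm
          · exact hzero s θ hpos hθ
        rw [hs0] at h
        exact h.hasDerivWithinAt) r ⟨hr, le_rfl⟩
    simpa [hV] using hconst
  refine ⟨u (0, 0), fun p => ?_⟩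
  set z : ℂ := ⟨p.1, p.2⟩ with hz
  have hre : ‖z‖ * cos z.arg = p.1 := Complex.norm_mul_cos_arg z
  have him : ‖z‖ * sin z.arg = p.2 := Complex.norm_mul_sin_arg z
  have harg := Complex.arg_mem_Ioc z
  have hpV : V (‖z‖, z.arg) = u p := by
    simp only [hV, hre, him]
  rw [← hpV]
  rcases le_total 0 z.arg with h | h
  · exact hray _ _ (norm_nonneg z) ⟨h, by linarith [harg.2, pi_pos]⟩
  · rw [← hVper]
    exact hray _ _ (norm_nonneg z) ⟨by linarith [harg.1, pi_pos], by linarith⟩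
end

section
/- Let Ω ⊆ ℝ² be open and let u : Ω → ℝ be a smooth harmonic function (Δu = u_xx + u_yy = 0 on Ω). Then on Ω, Δ log(1 + ‖∇u‖²) = 2 ‖Hess u‖² / (1 + ‖∇u‖²)², where ‖∇u‖² = u_x² + u_y² and ‖Hess u‖² = u_xx² + 2 u_xy² + u_yy² is the squared Frobenius norm of the matrix of second partial derivatives. -/
open Real Set

/-- Partial derivative in the first (`x`) variable of a function on `ℝ²`. -/
noncomputable def pdx (w : ℝ × ℝ → ℝ) (p : ℝ × ℝ) : ℝ :=
  deriv (fun s => w (s, p.2)) p.1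

/-- Partial derivative in the second (`y`) variable of a function on `ℝ²`. -/
noncomputable def pdy (w : ℝ × ℝ → ℝ) (p : ℝ × ℝ) : ℝ :=
  deriv (fun t => w (p.1, t)) p.2

/-- The Euclidean Laplacian `Δw = w_xx + w_yy` of a function on `ℝ²`. -/
noncomputable def lap (w : ℝ × ℝ → ℝ) (p : ℝ × ℝ) : ℝ :=
  pdx (pdx w) p + pdy (pdy w) p

lemma two_le_smooth : (2 : WithTop ℕ∞) ≤ ((⊤ : ℕ∞) : WithTop ℕ∞) :=
  WithTop.coe_le_coe.2 (le_top : (2 : ℕ∞) ≤ ⊤)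

section PartialDerivatives

variable {Ω : Set (ℝ × ℝ)} {w v : ℝ × ℝ → ℝ} {p : ℝ × ℝ}

lemma pdx_eq_fderiv (hw : DifferentiableAt ℝ w p) : pdx w p = fderiv ℝ w p (1, 0) :=
  (hw.hasFDerivAt.comp_hasDerivAt p.1
    ((hasDerivAt_id p.1).prodMk (hasDerivAt_const p.1 p.2))).deriv

lemma pdy_eq_fderiv (hw : DifferentiableAt ℝ w p) : pdy w p = fderiv ℝ w p (0, 1) :=
  (hw.hasFDerivAt.comp_hasDerivAt p.2
    ((hasDerivAt_const p.2 p.1).prodMk (hasDerivAt_id p.2))).deriv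

lemma pdx_congr (h : w =ᶠ[nhds p] v) : pdx w p = pdx v p :=
  Filter.EventuallyEq.deriv_eq <|
    (by fun_prop : Continuous fun s : ℝ => (s, p.2)).continuousAt.eventually h

lemma pdy_congr (h : w =ᶠ[nhds p] v) : pdy w p = pdy v p :=
  Filter.EventuallyEq.deriv_eq <|
    (by fun_prop : Continuous fun t : ℝ => (p.1, t)).continuousAt.eventually h

lemma ContDiffOn.differentiableAt_of_isOpen (hΩ : IsOpen Ω) (hw : ContDiffOn ℝ (⊤ : ℕ∞) w Ω)
    (hp : p ∈ Ω) : DifferentiableAt ℝ w p :=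
  (hw.contDiffAt (hΩ.mem_nhds hp)).differentiableAt (by simp)

lemma ContDiffOn.pdx (hΩ : IsOpen Ω) (hw : ContDiffOn ℝ (⊤ : ℕ∞) w Ω) :
    ContDiffOn ℝ (⊤ : ℕ∞) (pdx w) Ω :=
  ((hw.fderiv_of_isOpen hΩ (by simp)).clm_apply contDiffOn_const).congr fun _ hq =>
    pdx_eq_fderiv (hw.differentiableAt_of_isOpen hΩ hq)

lemma ContDiffOn.pdy (hΩ : IsOpen Ω) (hw : ContDiffOn ℝ (⊤ : ℕ∞) w Ω) :
    ContDiffOn ℝ (⊤ : ℕ∞) (pdy w) Ω :=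
  ((hw.fderiv_of_isOpen hΩ (by simp)).clm_apply contDiffOn_const).congr fun _ hq =>
    pdy_eq_fderiv (hw.differentiableAt_of_isOpen hΩ hq)

/-- Mixed second partial derivatives of a smooth function commute. -/
lemma pdx_pdy_comm (hΩ : IsOpen Ω) (hw : ContDiffOn ℝ (⊤ : ℕ∞) w Ω) (hp : p ∈ Ω) :
    pdx (pdy w) p = pdy (pdx w) p := by
  have hd : DifferentiableAt ℝ (fderiv ℝ w) p :=
    ((hw.fderiv_of_isOpen hΩ (m := (⊤ : ℕ∞)) (by simp)).contDiffAt
      (hΩ.mem_nhds hp)).differentiableAt (by simp)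
  have hx : pdx w =ᶠ[nhds p] fun q => fderiv ℝ w q (1, 0) := by
    filter_upwards [hΩ.mem_nhds hp] with q hq
    exact pdx_eq_fderiv (hw.differentiableAt_of_isOpen hΩ hq)
  have hy : pdy w =ᶠ[nhds p] fun q => fderiv ℝ w q (0, 1) := by
    filter_upwards [hΩ.mem_nhds hp] with q hq
    exact pdy_eq_fderiv (hw.differentiableAt_of_isOpen hΩ hq)
  have hsymm : IsSymmSndFDerivAt ℝ w p :=
    (hw.contDiffAt (hΩ.mem_nhds hp)).isSymmSndFDerivAt
      (by simpa using two_le_smooth)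
  rw [pdx_congr hy, pdy_congr hx, pdx_eq_fderiv (hd.clm_apply (by fun_prop)),
    pdy_eq_fderiv (hd.clm_apply (by fun_prop)), fderiv_clm_apply hd (by fun_prop),
    fderiv_clm_apply hd (by fun_prop)]
  simpa using hsymm (1, 0) (0, 1)

lemma pdx_add (hw : DifferentiableAt ℝ w p) (hv : DifferentiableAt ℝ v p) :
    pdx (fun q => w q + v q) p = pdx w p + pdx v p := by
  rw [pdx_eq_fderiv (hw.fun_add hv), pdx_eq_fderiv hw, pdx_eq_fderiv hv, fderiv_fun_add hw hv]
  rfl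

lemma pdy_add (hw : DifferentiableAt ℝ w p) (hv : DifferentiableAt ℝ v p) :
    pdy (fun q => w q + v q) p = pdy w p + pdy v p := by
  rw [pdy_eq_fderiv (hw.fun_add hv), pdy_eq_fderiv hw, pdy_eq_fderiv hv, fderiv_fun_add hw hv]
  rfl

/-- The Laplacian commutes with `pdx`. -/
lemma lap_pdx (hΩ : IsOpen Ω) (hw : ContDiffOn ℝ (⊤ : ℕ∞) w Ω) (hp : p ∈ Ω) :
    lap (pdx w) p = pdx (lap w) p := by
  have hcomm : pdy (pdx w) =ᶠ[nhds p] pdx (pdy w) := by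
    filter_upwards [hΩ.mem_nhds hp] with q hq using (pdx_pdy_comm hΩ hw hq).symm
  calc lap (pdx w) p = pdx (pdx (pdx w)) p + pdx (pdy (pdy w)) p := by
        rw [lap, pdy_congr hcomm, pdx_pdy_comm hΩ (hw.pdy hΩ) hp]
    _ = pdx (lap w) p := (pdx_add
        (((hw.pdx hΩ).pdx hΩ).differentiableAt_of_isOpen hΩ hp)
        (((hw.pdy hΩ).pdy hΩ).differentiableAt_of_isOpen hΩ hp)).symm

/-- The Laplacian commutes with `pdy`. -/
lemma lap_pdy (hΩ : IsOpen Ω) (hw : ContDiffOn ℝ (⊤ : ℕ∞) w Ω) (hp : p ∈ Ω) :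
    lap (pdy w) p = pdy (lap w) p := by
  have hcomm : pdx (pdy w) =ᶠ[nhds p] pdy (pdx w) := by
    filter_upwards [hΩ.mem_nhds hp] with q hq using pdx_pdy_comm hΩ hw hq
  calc lap (pdy w) p = pdy (pdx (pdx w)) p + pdy (pdy (pdy w)) p := by
        rw [lap, pdx_congr hcomm, pdx_pdy_comm hΩ (hw.pdx hΩ) hp]
    _ = pdy (lap w) p := (pdy_add
        (((hw.pdx hΩ).pdx hΩ).differentiableAt_of_isOpen hΩ hp)
        (((hw.pdy hΩ).pdy hΩ).differentiableAt_of_isOpen hΩ hp)).symm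

end PartialDerivatives

/-- Second derivative of `log (1 + (f² + g²))` in one variable. -/
lemma deriv_deriv_log_one_add_sq_add_sq {f g : ℝ → ℝ} {t : ℝ}
    (hf : ContDiffAt ℝ 2 f t) (hg : ContDiffAt ℝ 2 g t) :
    deriv (fun s => deriv (fun r => Real.log (1 + (f r ^ 2 + g r ^ 2))) s) t =
      2 * (deriv f t ^ 2 + f t * deriv (deriv f) t + deriv g t ^ 2 + g t * deriv (deriv g) t) /
          (1 + (f t ^ 2 + g t ^ 2)) -
        (2 * (f t * deriv f t + g t * deriv g t)) ^ 2 / (1 + (f t ^ 2 + g t ^ 2)) ^ 2 := by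
  have hpos : ∀ s, 1 + (f s ^ 2 + g s ^ 2) ≠ 0 := fun s => by positivity
  have hsum : ∀ s, DifferentiableAt ℝ f s → DifferentiableAt ℝ g s →
      HasDerivAt (fun r => 1 + (f r ^ 2 + g r ^ 2))
        (2 * (f s * deriv f s + g s * deriv g s)) s := fun s hfs hgs => by
    refine (((hfs.hasDerivAt.fun_pow 2).add (hgs.hasDerivAt.fun_pow 2)).const_add 1).congr_deriv ?_
    simp
    ring
  have hfirst : (fun s => deriv (fun r => Real.log (1 + (f r ^ 2 + g r ^ 2))) s) =ᶠ[nhds t]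
      fun s => 2 * (f s * deriv f s + g s * deriv g s) / (1 + (f s ^ 2 + g s ^ 2)) := by
    filter_upwards [hf.eventually (by simp), hg.eventually (by simp)] with s hfs hgs
    exact ((hsum s (hfs.differentiableAt (by simp)) (hgs.differentiableAt (by simp))).log
      (hpos s)).deriv
  have hft := (hf.differentiableAt (by simp)).hasDerivAt
  have hgt := (hg.differentiableAt (by simp)).hasDerivAt
  have hft2 : HasDerivAt (deriv f) (deriv (deriv f) t) t :=
    (((hf.fderiv_right one_add_one_eq_two.le).differentiableAt one_ne_zero).clm_apply
      (differentiableAt_const 1)).hasDerivAt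
  have hgt2 : HasDerivAt (deriv g) (deriv (deriv g) t) t :=
    (((hg.fderiv_right one_add_one_eq_two.le).differentiableAt one_ne_zero).clm_apply
      (differentiableAt_const 1)).hasDerivAt
  rw [hfirst.deriv_eq, ((((hft.fun_mul hft2).fun_add (hgt.fun_mul hgt2)).const_mul 2).fun_div
    (hsum t hft.differentiableAt hgt.differentiableAt) (hpos t)).deriv]
  have := hpos t
  field_simp
  ring

lemma pdx_pdx_log_one_add_sq_add_sq {a b : ℝ × ℝ → ℝ} {p : ℝ × ℝ}
    (ha : ContDiffAt ℝ 2 a p) (hb : ContDiffAt ℝ 2 b p) :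
    pdx (pdx fun q => Real.log (1 + (a q ^ 2 + b q ^ 2))) p =
      2 * (pdx a p ^ 2 + a p * pdx (pdx a) p + pdx b p ^ 2 + b p * pdx (pdx b) p) /
          (1 + (a p ^ 2 + b p ^ 2)) -
        (2 * (a p * pdx a p + b p * pdx b p)) ^ 2 / (1 + (a p ^ 2 + b p ^ 2)) ^ 2 := by
  have hline : ContDiffAt ℝ 2 (fun s : ℝ => (s, p.2)) p.1 := by fun_prop
  exact deriv_deriv_log_one_add_sq_add_sq (f := fun s => a (s, p.2)) (g := fun s => b (s, p.2))
    (ContDiffAt.comp p.1 ha hline) (ContDiffAt.comp p.1 hb hline)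

lemma pdy_pdy_log_one_add_sq_add_sq {a b : ℝ × ℝ → ℝ} {p : ℝ × ℝ}
    (ha : ContDiffAt ℝ 2 a p) (hb : ContDiffAt ℝ 2 b p) :
    pdy (pdy fun q => Real.log (1 + (a q ^ 2 + b q ^ 2))) p =
      2 * (pdy a p ^ 2 + a p * pdy (pdy a) p + pdy b p ^ 2 + b p * pdy (pdy b) p) /
          (1 + (a p ^ 2 + b p ^ 2)) -
        (2 * (a p * pdy a p + b p * pdy b p)) ^ 2 / (1 + (a p ^ 2 + b p ^ 2)) ^ 2 := by
  have hline : ContDiffAt ℝ 2 (fun s : ℝ => (p.1, s)) p.2 := by fun_prop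
  exact deriv_deriv_log_one_add_sq_add_sq (f := fun s => a (p.1, s)) (g := fun s => b (p.1, s))
    (ContDiffAt.comp p.2 ha hline) (ContDiffAt.comp p.2 hb hline)

/-- For a smooth harmonic function `u` on an open set `Ω ⊆ ℝ²`,
`Δ log(1 + ‖∇u‖²) = 2‖Hess u‖² / (1 + ‖∇u‖²)²`, where
`‖∇u‖² = u_x² + u_y²` and `‖Hess u‖² = u_xx² + 2u_xy² + u_yy²`. -/
theorem laplacian_log_one_add_gradsq (Ω : Set (ℝ × ℝ)) (hΩ : IsOpen Ω)
    (u : ℝ × ℝ → ℝ) (hu : ContDiffOn ℝ (⊤ : ℕ∞) u Ω)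
    (hharm : ∀ p ∈ Ω, lap u p = 0) :
    ∀ p ∈ Ω,
      lap (fun q => Real.log (1 + ((pdx u q) ^ 2 + (pdy u q) ^ 2))) p =
        2 * ((pdx (pdx u) p) ^ 2 + 2 * (pdy (pdx u) p) ^ 2 + (pdy (pdy u) p) ^ 2) /
          (1 + ((pdx u p) ^ 2 + (pdy u p) ^ 2)) ^ 2 := by
  intro p hp
  have hnhds := hΩ.mem_nhds hp
  have hlap : lap u =ᶠ[nhds p] fun _ => 0 := by
    filter_upwards [hnhds] with q hq using hharm q hq
  have hlapa : lap (pdx u) p = 0 := by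
    rw [lap_pdx hΩ hu hp, pdx_congr hlap]
    simp [pdx]
  have hlapb : lap (pdy u) p = 0 := by
    rw [lap_pdy hΩ hu hp, pdy_congr hlap]
    simp [pdy]
  have ha := ((hu.pdx hΩ).contDiffAt hnhds).of_le two_le_smooth
  have hb := ((hu.pdy hΩ).contDiffAt hnhds).of_le two_le_smooth
  have hW : 1 + (pdx u p ^ 2 + pdy u p ^ 2) ≠ 0 := by positivity
  have htrace : pdy (pdy u) p = -pdx (pdx u) p := eq_neg_of_add_eq_zero_right (hharm p hp)
  rw [lap, pdx_pdx_log_one_add_sq_add_sq ha hb, pdy_pdy_log_one_add_sq_add_sq ha hb,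
    pdx_pdy_comm hΩ hu hp, htrace,
    eq_neg_of_add_eq_zero_right hlapa, eq_neg_of_add_eq_zero_right hlapb]
  field_simp
  ring
end
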